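/- arXiv:1505.02829 — 3 statements merged into one kernel-verified Lean document; each statement's English description precedes it below -/
import Mathlib

section
/- Let G be a two-connected cyclically orientable finite simple graph with n vertices, where n ≥ 3. Then G has at most n − 2 chordless cycles. -/
/-!
Fix an orientation in which every chordless cycle is cyclically oriented. If two neighbours of `u`
are joined by a walk avoiding `u` and its other neighbours, a shortest such walk closes up to a
chordless cycle through `u`, so exactly one of the two edges points away from `u`; hence no three
neighbours of `u` are pairwise joined in this way. It follows that a connected set disjoint from a
chordless cycle is attached to it at most along an edge.

Now let `S` grow from `∅`, keeping it attached at most along an edge to every connected set off it.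
Pick a component `K` of `G` minus `S`. If `K` is attached at two vertices `x` and `y`, add to `S` a
chordless cycle through the edge `x y` and `K`; otherwise add a vertex of `K`. Since the attachments
form a clique and a clique does not separate a chordless cycle, the first kind of step creates one
new chordless cycle and the second creates none. Each step adds a vertex, and `S` already has the
two vertices `x` and `y` when the first cycle is created.
-/

open SimpleGraph

variable {V : Type*}

/-- An orientation of a simple graph `G`: a directed relation choosing, for each
edge of `G`, exactly one of its two possible directions. -/
structure SimpleGraph.Orientation (G : SimpleGraph V) : Type _ where
  dir : V → V → Prop
  dir_adj : ∀ u v, dir u v → G.Adj u v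
  adj_iff_dir : ∀ u v, G.Adj u v → (dir u v ↔ ¬ dir v u)

/-- A closed walk is a chordless cycle if it is a cycle and the only edges of `G`
between vertices of the cycle are the edges of the cycle itself (i.e. it is an
induced cycle). -/
def SimpleGraph.Walk.IsChordlessCycle {G : SimpleGraph V} {v : V} (c : G.Walk v v) : Prop :=
  c.IsCycle ∧ ∀ u w : V, u ∈ c.support → w ∈ c.support → G.Adj u w → s(u, w) ∈ c.edges

/-- A cycle (closed walk) is cyclically oriented by an orientation `o` if all of
its darts point the same way around the cycle. -/
def SimpleGraph.Orientation.IsCyclicOn {G : SimpleGraph V} (o : G.Orientation) {v : V}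
    (c : G.Walk v v) : Prop :=
  (∀ d ∈ c.darts, o.dir d.toProd.1 d.toProd.2) ∨ (∀ d ∈ c.darts, o.dir d.toProd.2 d.toProd.1)

/-- A graph is cyclically orientable if it admits an orientation in which every
chordless cycle is cyclically oriented. -/
def SimpleGraph.CyclicallyOrientable (G : SimpleGraph V) : Prop :=
  ∃ o : G.Orientation, ∀ (v : V) (c : G.Walk v v), c.IsChordlessCycle → o.IsCyclicOn c

/-- A subgraph has no cut vertex if it is connected and remains connected after
the deletion of any single one of its vertices. -/
def SimpleGraph.Subgraph.HasNoCutVertex {G : SimpleGraph V} (H : G.Subgraph) : Prop :=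
  H.coe.Connected ∧ ∀ v ∈ H.verts, (H.deleteVerts {v}).coe.Connected

/-- A block (two-connected component) of `G`: a maximal subgraph of `G` that has
no cut vertex. -/
def SimpleGraph.Subgraph.IsBlock {G : SimpleGraph V} (H : G.Subgraph) : Prop :=
  H.HasNoCutVertex ∧ ∀ H' : G.Subgraph, H ≤ H' → H'.HasNoCutVertex → H' = H

/-- A graph is two-connected if it is connected and the removal of any single
vertex leaves it connected (at least two vertices must be removed to
disconnect it). -/
def SimpleGraph.IsTwoConnected (G : SimpleGraph V) : Prop :=
  G.Connected ∧ ∀ v : V, (G.induce {w : V | w ≠ v}).Connected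

/-- A graph consists of a single cycle: some cycle passes through all its
vertices and uses all its edges. (A cycle has at least 3 vertices.) -/
def SimpleGraph.IsCycleGraph (G : SimpleGraph V) : Prop :=
  ∃ (v : V) (c : G.Walk v v), c.IsCycle ∧ (∀ w : V, w ∈ c.support) ∧
    ∀ e ∈ G.edgeSet, e ∈ c.edges

/-- Two subgraphs meet along the single edge `(x, y)`: their intersection
consists exactly of the vertices `x, y` and the edge between them. -/
def SimpleGraph.Subgraph.MeetAlongSingleEdge {G : SimpleGraph V} (G' C : G.Subgraph)
    (x y : V) : Prop :=
  x ≠ y ∧ (G' ⊓ C).verts = {x, y} ∧ (G' ⊓ C).edgeSet = {s(x, y)}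

/-- `x` and `y` are joined by a walk of `G` all of whose vertices lie in `B`. Unlike reachability
in `G.induce B`, this does not require `x` and `y` to be terms of the subtype `B`. -/
def ReachableWithin (G : SimpleGraph V) (B : Set V) (x y : V) : Prop :=
  ∃ p : G.Walk x y, ∀ w ∈ p.support, w ∈ B

variable {G : SimpleGraph V}

namespace ReachableWithin

variable {A B : Set V} {x y z : V}

lemma refl (hx : x ∈ B) : ReachableWithin G B x x :=
  ⟨.nil, by simpa using hx⟩

lemma symm (h : ReachableWithin G B x y) : ReachableWithin G B y x := by
  obtain ⟨p, hp⟩ := h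
  exact ⟨p.reverse, by simpa using hp⟩

lemma trans (hxy : ReachableWithin G B x y) (hyz : ReachableWithin G B y z) :
    ReachableWithin G B x z := by
  obtain ⟨p, hp⟩ := hxy
  obtain ⟨q, hq⟩ := hyz
  exact ⟨p.append q, fun w hw => ((Walk.mem_support_append_iff _ _).1 hw).elim (hp w) (hq w)⟩

lemma mono (h : ReachableWithin G A x y) (hAB : A ⊆ B) : ReachableWithin G B x y :=
  h.imp fun _ hp w hw => hAB (hp w hw)

lemma of_adj (hxy : G.Adj x y) (hx : x ∈ B) (hy : y ∈ B) : ReachableWithin G B x y :=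
  ⟨hxy.toWalk, by simp [hx, hy]⟩

lemma right_mem (h : ReachableWithin G B x y) : y ∈ B :=
  h.elim fun p hp => hp y p.end_mem_support

lemma mem_of_adj_closed (h : ReachableWithin G B x y)
    (hA : ∀ a ∈ A, ∀ b ∈ B, G.Adj a b → b ∈ A) (hx : x ∈ A) : y ∈ A := by
  obtain ⟨p, hp⟩ := h
  induction p with
  | nil => exact hx
  | cons hadj p ih =>
    simp only [Walk.support_cons, List.mem_cons, forall_eq_or_imp] at hp
    exact ih (hA _ hx _ (hp.2 _ p.start_mem_support) hadj) hp.2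

lemma exists_last (h : ReachableWithin G B x y) (hx : x ∈ A) :
    ∃ z ∈ A, z ∈ B ∧ ReachableWithin G (insert z (B \ A)) z y := by
  obtain ⟨p, hp⟩ := h
  induction p using Walk.concatRec with
  | Hnil => exact ⟨_, hx, hp _ (by simp), .refl (Set.mem_insert _ _)⟩
  | @Hconcat _ v w p hadj ih =>
    simp only [Walk.support_concat, List.mem_append, List.mem_singleton] at hp
    obtain ⟨z, hzA, hzB, hzv⟩ := ih hx fun w hw => hp w (.inl hw)
    by_cases hw : w ∈ A
    · exact ⟨w, hw, hp w (.inr rfl), .refl (Set.mem_insert _ _)⟩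
    · exact ⟨z, hzA, hzB, hzv.trans (of_adj hadj hzv.right_mem (.inr ⟨hp w (.inr rfl), hw⟩))⟩

end ReachableWithin

lemma preconnected_induce_iff_reachableWithin {A : Set V} :
    (G.induce A).Preconnected ↔ ∀ x ∈ A, ∀ y ∈ A, ReachableWithin G A x y := by
  constructor
  · intro h x hx y hy
    suffices ∀ {a b : A}, (G.induce A).Walk a b → ReachableWithin G A a b from
      (h ⟨x, hx⟩ ⟨y, hy⟩).elim this
    intro a b p
    induction p with
    | nil => exact .refl (Subtype.coe_prop _)
    | @cons a b _ hadj _ ih => exact (ReachableWithin.of_adj (induce_adj.1 hadj) a.2 b.2).trans ih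
  · rintro h ⟨x, hx⟩ ⟨y, hy⟩
    obtain ⟨p, hp⟩ := h x hx y hy
    exact ⟨p.induce A hp⟩

section Walks

variable {x y : V} {T : Set V}

lemma preconnected_induce_support_sdiff_of_subset_start {p : G.Walk x y} (hp : p.IsPath)
    (hT : ∀ w ∈ p.support, w ∈ T → w = x) : (G.induce ({w | w ∈ p.support} \ T)).Preconnected := by
  by_cases hx : x ∈ T
  · cases p with
    | nil =>
      have : {w | w ∈ (Walk.nil : G.Walk x x).support} \ T = ∅ := by grind [Walk.support_nil]
      rw [this]
      exact fun a => a.2.elim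
    | cons hadj p =>
      rw [Walk.cons_isPath_iff] at hp
      have : {w | w ∈ (Walk.cons hadj p).support} \ T = {w | w ∈ p.support} := by
        ext w
        grind [Walk.support_cons]
      rw [this]
      exact p.connected_induce_support.preconnected
  · have : {w | w ∈ p.support} \ T = {w | w ∈ p.support} := by
      ext w
      grind
    rw [this]
    exact p.connected_induce_support.preconnected

lemma preconnected_induce_support_sdiff_of_subset_ends {p : G.Walk x y} (hp : p.IsPath)
    (hT : ∀ w ∈ p.support, w ∈ T → w = x ∨ w = y) :
    (G.induce ({w | w ∈ p.support} \ T)).Preconnected := by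
  by_cases hx : x ∈ T
  · cases p with
    | nil => exact preconnected_induce_support_sdiff_of_subset_start hp (by simp)
    | cons hadj p =>
      rw [Walk.cons_isPath_iff] at hp
      have : {w | w ∈ (Walk.cons hadj p).support} \ T = {w | w ∈ p.reverse.support} \ T := by
        ext w
        grind [Walk.support_cons, Walk.support_reverse]
      rw [this]
      refine preconnected_induce_support_sdiff_of_subset_start hp.1.reverse ?_
      grind [Walk.support_cons, Walk.support_reverse]
  · have : {w | w ∈ p.support} \ T = {w | w ∈ p.reverse.support} \ T := by
      simp
    rw [this]
    refine preconnected_induce_support_sdiff_of_subset_start hp.reverse ?_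
    grind [Walk.support_reverse]

lemma exists_walk_length_lt_of_adj {p : G.Walk x y} {a b : V} (ha : a ∈ p.support)
    (hb : b ∈ p.support) (hab : G.Adj a b) (hp : s(a, b) ∉ p.edges) :
    ∃ q : G.Walk x y, q.length < p.length ∧ q.support ⊆ p.support ∧
      q.edges ⊆ s(a, b) :: p.edges := by
  obtain ⟨p₁, p₂, rfl⟩ := Walk.mem_support_iff_exists_append.1 ha
  wlog hb₂ : b ∈ p₂.support generalizing a b
  · have hb₁ := ((Walk.mem_support_append_iff _ _).1 hb).resolve_right hb₂
    obtain ⟨q₁, q₂, rfl⟩ := Walk.mem_support_iff_exists_append.1 hb₁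
    rw [← Walk.append_assoc, Sym2.eq_swap] at hp ⊢
    rw [← Walk.append_assoc] at ha hb
    exact this hab.symm q₁ _ hb ha hp
      ((Walk.mem_support_append_iff _ _).2 (.inl q₂.end_mem_support))
  obtain ⟨q₁, q₂, rfl⟩ := Walk.mem_support_iff_exists_append.1 hb₂
  refine ⟨p₁.append (.cons hab q₂), ?_, ?_, ?_⟩
  · cases q₁ with
    | nil => exact absurd rfl hab.ne
    | cons h q₁ =>
      cases q₁ with
      | nil => simp at hp
      | cons h' q₁ => simp
  · intro w
    grind [Walk.mem_support_append_iff, Walk.support_cons, Walk.end_mem_support]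
  · intro e
    grind [Walk.edges_append, Walk.edges_cons]

end Walks

lemma exists_isChordlessCycle_cons {u x : V} (hux : G.Adj u x) (q : G.Walk x u)
    (hq : s(u, x) ∉ q.edges) :
    ∃ p : G.Walk x u, p.support ⊆ q.support ∧ (Walk.cons hux p).IsChordlessCycle := by
  classical
  let P : Set (G.Walk x u) := {p | p.support ⊆ q.support ∧ s(u, x) ∉ p.edges}
  obtain ⟨p, ⟨hpq, hpe⟩, hmin⟩ :=
    (measure Walk.length).wf.has_min P ⟨q, List.Subset.refl _, hq⟩
  have hbypass : p.bypass ∈ P :=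
    ⟨List.Subset.trans p.support_bypass_subset_support hpq,
      fun h => hpe (p.edges_bypass_subset_edges h)⟩
  have hpath : p.IsPath := by
    rw [← p.bypass_eq_self_of_length_le_length_bypass (not_lt.1 (hmin _ hbypass))]
    exact p.bypass_isPath
  refine ⟨p, hpq, (Walk.cons_isCycle_iff p hux).2 ⟨hpath, hpe⟩, fun a b ha hb hab => ?_⟩
  have hsupp : ∀ w ∈ (Walk.cons hux p).support, w ∈ p.support := by simp
  by_contra hchord
  simp only [Walk.edges_cons, List.mem_cons, not_or] at hchord
  obtain ⟨r, hlt, hrp, hre⟩ :=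
    exists_walk_length_lt_of_adj (hsupp a ha) (hsupp b hb) hab hchord.2
  refine hmin r ⟨List.Subset.trans hrp hpq, fun h => ?_⟩ hlt
  exact (List.mem_cons.1 (hre h)).elim (fun h => hchord.1 h.symm) hpe

/-- `A` is the vertex set of a chordless cycle of `G`. Since chordless cycles are induced subgraphs,
they are determined by their vertex sets. -/
def IsChordlessCycleSet (G : SimpleGraph V) (A : Set V) : Prop :=
  ∃ (v : V) (c : G.Walk v v), c.IsChordlessCycle ∧ c.toSubgraph.verts = A

lemma isInduced_toSubgraph_of_isChordlessCycle {v : V} {c : G.Walk v v}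
    (hc : c.IsChordlessCycle) : c.toSubgraph.IsInduced :=
  Walk.isInduced_toSubgraph.2 (Walk.isChordless_iff_forall_mem_edges.2 hc.2)

lemma isChordlessCycle_rotate [DecidableEq V] {u v : V} {c : G.Walk v v}
    (hc : c.IsChordlessCycle) (hu : u ∈ c.support) : (c.rotate u hu).IsChordlessCycle := by
  refine ⟨hc.1.rotate hu, fun a b ha hb hab => ?_⟩
  rw [Walk.mem_support_rotate_iff] at ha hb
  exact (c.rotate_edges u hu).mem_iff.2 (hc.2 a b ha hb hab)

namespace IsChordlessCycleSet

variable {A C T : Set V} {u x y : V}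

lemma exists_path (hA : IsChordlessCycleSet G A) (hu : u ∈ A) :
    ∃ (p q : V) (r : G.Walk p q), r.IsPath ∧ u ∉ r.support ∧ p ≠ q ∧
      A = insert u {w | w ∈ r.support} ∧ G.neighborSet u ∩ A = {p, q} := by
  classical
  obtain ⟨v, c₀, hc₀, rfl⟩ := hA
  rw [Walk.mem_verts_toSubgraph] at hu
  obtain ⟨c, hc, hverts⟩ : ∃ c : G.Walk u u, c.IsChordlessCycle ∧
      c.toSubgraph.verts = c₀.toSubgraph.verts :=
    ⟨_, isChordlessCycle_rotate hc₀ hu, by rw [Walk.toSubgraph_rotate]⟩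
  rw [← hverts]
  have hN : G.neighborSet u ∩ c.toSubgraph.verts = {c.snd, c.penultimate} := by
    rw [← hc.1.neighborSet_toSubgraph_endpoint]
    ext w
    exact ⟨fun h => isInduced_toSubgraph_of_isChordlessCycle hc (by simp) h.2 h.1,
      fun h => ⟨h.adj_sub, h.snd_mem⟩⟩
  have hne := hc.1.snd_ne_penultimate
  cases c with
  | nil => exact absurd rfl hne
  | cons hadj p =>
    cases p with
    | nil => exact absurd rfl hadj.ne
    | cons hadj' p =>
      obtain ⟨q, r, hadj'', hr⟩ := Walk.exists_cons_eq_concat hadj' p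
      have hcyc := hc.1
      rw [hr] at hcyc hN hne ⊢
      rw [Walk.cons_isCycle_iff, Walk.concat_isPath_iff] at hcyc
      have hpen : (Walk.cons hadj (r.concat hadj'')).penultimate = q := by
        rw [← Walk.concat_cons, Walk.penultimate_concat]
      have hsupp : (Walk.cons hadj (r.concat hadj'')).toSubgraph.verts =
          insert u {w | w ∈ r.support} := by
        ext w
        have := r.start_mem_support
        grind [Walk.mem_verts_toSubgraph, Walk.support_cons, Walk.support_concat]
      rw [Walk.snd_cons, hpen] at hne hN
      exact ⟨_, q, r, hcyc.1.1, hcyc.1.2, hne, hsupp, hN⟩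

lemma nonempty (hA : IsChordlessCycleSet G A) : A.Nonempty := by
  obtain ⟨v, c, -, rfl⟩ := hA
  exact ⟨v, by simp⟩

lemma preconnected_induce_sdiff (hA : IsChordlessCycleSet G A) (hT : G.IsClique T) :
    (G.induce (A \ T)).Preconnected := by
  by_cases hAT : ∃ u ∈ A, u ∈ T
  · obtain ⟨u, hu, huT⟩ := hAT
    obtain ⟨p, q, r, hr, hur, -, rfl, hN⟩ := hA.exists_path hu
    rw [Set.insert_sdiff_of_mem _ huT]
    refine preconnected_induce_support_sdiff_of_subset_ends hr fun w hw hwT => ?_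
    have huw : u ≠ w := fun h => hur (h ▸ hw)
    have : w ∈ ({p, q} : Set V) := hN.subset ⟨hT huT hwT huw, .inr hw⟩
    simpa using this
  · obtain ⟨v, c, -, rfl⟩ := hA
    rw [sdiff_eq_left.2 (Set.disjoint_left.2 fun w hw hwT => hAT ⟨w, hw, hwT⟩),
      Walk.verts_toSubgraph]
    exact c.connected_induce_support.preconnected

lemma not_subset_pair (hA : IsChordlessCycleSet G A) : ¬ A ⊆ {x, y} := by
  intro h
  obtain ⟨u, hu⟩ := hA.nonempty
  obtain ⟨p, q, -, -, -, hpq, -, hN⟩ := hA.exists_path hu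
  have hp : G.Adj u p ∧ p ∈ A := hN.superset (by simp)
  have hq : G.Adj u q ∧ q ∈ A := hN.superset (by simp)
  have := hp.1.ne
  have := hq.1.ne
  grind

lemma eq_of_subset (hA : IsChordlessCycleSet G A) (hC : IsChordlessCycleSet G C) (hAC : A ⊆ C) :
    A = C := by
  refine hAC.antisymm fun c hc => ?_
  obtain ⟨a, ha⟩ := hA.nonempty
  have hconn := hC.preconnected_induce_sdiff (T := ∅) (by simp)
  rw [Set.sdiff_empty, preconnected_induce_iff_reachableWithin] at hconn
  refine (hconn a (hAC ha) c hc).mem_of_adj_closed (fun s hs t ht hst => ?_) ha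
  obtain ⟨p, q, -, -, -, hpq, -, hN⟩ := hA.exists_path hs
  obtain ⟨p', q', -, -, -, -, -, hN'⟩ := hC.exists_path (hAC hs)
  have hp : G.Adj s p ∧ p ∈ A := hN.superset (by simp)
  have hq : G.Adj s q ∧ q ∈ A := hN.superset (by simp)
  have hp' : p ∈ ({p', q'} : Set V) := hN'.subset ⟨hp.1, hAC hp.2⟩
  have hq' : q ∈ ({p', q'} : Set V) := hN'.subset ⟨hq.1, hAC hq.2⟩
  have ht' : t ∈ ({p', q'} : Set V) := hN'.subset ⟨hst, ht⟩
  simp only [Set.mem_insert_iff, Set.mem_singleton_iff] at hp' hq' ht'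
  grind

end IsChordlessCycleSet

/-- `x` and `y` are joined by a walk which, apart from `x` and `y` themselves, avoids both `u` and
its neighbours. For distinct neighbours `x`, `y` of `u`, this says that the edges `u x` and `u y`
lie on a common chordless cycle. -/
def Linked (G : SimpleGraph V) (u x y : V) : Prop :=
  ReachableWithin G ({x, y} ∪ Gᶜ.neighborSet u) x y

lemma dir_snd_iff_not_dir_penultimate {o : G.Orientation} {v : V} {c : G.Walk v v}
    (hc : ¬ c.Nil) (ho : o.IsCyclicOn c) : o.dir v c.snd ↔ ¬ o.dir v c.penultimate := by
  have hfirst := o.adj_iff_dir _ _ (c.adj_snd hc)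
  have hlast := o.adj_iff_dir _ _ (c.adj_penultimate hc)
  rcases ho with ho | ho
  · have h₁ := ho _ (c.firstDart_mem_darts hc)
    have h₂ := ho _ (c.lastDart_mem_darts hc)
    simp only [Walk.firstDart, Walk.lastDart] at h₁ h₂
    tauto
  · have h₁ := ho _ (c.firstDart_mem_darts hc)
    have h₂ := ho _ (c.lastDart_mem_darts hc)
    simp only [Walk.firstDart, Walk.lastDart] at h₁ h₂
    tauto

namespace Linked

variable {u w x y z : V}

lemma of_reachableWithin (hx : ReachableWithin G (insert x (Gᶜ.neighborSet u)) x w)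
    (hy : ReachableWithin G (insert y (Gᶜ.neighborSet u)) y w) : Linked G u x y :=
  (hx.mono (by grind)).trans (hy.mono (by grind)).symm

lemma dir_iff_not_dir {o : G.Orientation}
    (ho : ∀ (v : V) (c : G.Walk v v), c.IsChordlessCycle → o.IsCyclicOn c)
    (hl : Linked G u x y) (hx : G.Adj u x) (hy : G.Adj u y) (hxy : x ≠ y) :
    o.dir u x ↔ ¬ o.dir u y := by
  obtain ⟨p, hp⟩ := hl
  have hu : u ∉ p.support := fun hu => by simpa [hx.ne, hy.ne] using hp u hu
  have hux : s(u, x) ∉ (p.concat hy.symm).edges := by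
    have := mt (p.fst_mem_support_of_mem_edges (t := u) (u := x)) hu
    grind [Walk.edges_concat]
  obtain ⟨q, hqp, hq⟩ := exists_isChordlessCycle_cons hx (p.concat hy.symm) hux
  set c := Walk.cons hx q
  have hzu : G.Adj c.penultimate u := c.adj_penultimate hq.1.not_nil
  have hsnd : c.snd = x := Walk.snd_cons q hx
  have hxz : x ≠ c.penultimate := hsnd ▸ hq.1.snd_ne_penultimate
  have hzq : c.penultimate ∈ q.support :=
    (List.mem_cons.1 (c.getVert_mem_support _)).resolve_left hzu.ne
  have hzp : c.penultimate ∈ p.support := by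
    simpa [Walk.support_concat, hzu.ne] using hqp hzq
  have hzy : c.penultimate = y := by
    simpa [hxz.symm, hzu.symm] using hp _ hzp
  exact hzy ▸ hsnd ▸ dir_snd_iff_not_dir_penultimate hq.1.not_nil (ho u c hq)

lemma not_pairwise (hco : G.CyclicallyOrientable) (hx : G.Adj u x) (hy : G.Adj u y)
    (hz : G.Adj u z) (hxy : x ≠ y) (hxz : x ≠ z) (hyz : y ≠ z) :
    ¬ (Linked G u x y ∧ Linked G u x z ∧ Linked G u y z) := by
  rintro ⟨lxy, lxz, lyz⟩
  obtain ⟨o, ho⟩ := hco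
  have := lxy.dir_iff_not_dir ho hx hy hxy
  have := lxz.dir_iff_not_dir ho hx hz hxz
  have := lyz.dir_iff_not_dir ho hy hz hyz
  tauto

end Linked

/-- The vertices of `S` through which `K` is attached to `S`, i.e. those with a neighbour in
`K`. -/
def attachments (G : SimpleGraph V) (K S : Set V) : Set V :=
  {s ∈ S | ∃ k ∈ K, G.Adj s k}

section CyclicallyOrientable

variable {C K : Set V}

lemma IsChordlessCycleSet.reachableWithin_of_compl_adj {u w p q : V}
    (hC : IsChordlessCycleSet G C) (hw : w ∈ C) (huw : Gᶜ.Adj u w)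
    (hN : G.neighborSet u ∩ C = {p, q}) (hpq : p ≠ q) :
    ReachableWithin G (insert p (Gᶜ.neighborSet u)) p w := by
  have hp : G.Adj u p ∧ p ∈ C := hN.superset (by simp)
  have hq : G.Adj u q ∧ q ∈ C := hN.superset (by simp)
  have hconn := hC.preconnected_induce_sdiff (isClique_pair.2 fun _ => hq.1)
  rw [preconnected_induce_iff_reachableWithin] at hconn
  have hwq : w ≠ q := fun h => huw.2 (h ▸ hq.1)
  refine (hconn p ⟨hp.2, by simp [hpq, hp.1.ne']⟩ w ⟨hw, by simp [huw.1.symm, hwq]⟩).mono ?_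
  rintro v ⟨hv, hvuq⟩
  simp only [Set.mem_insert_iff, Set.mem_singleton_iff, not_or] at hvuq
  by_cases hadj : G.Adj u v
  · have : v ∈ ({p, q} : Set V) := hN.subset ⟨hadj, hv⟩
    exact .inl (this.resolve_right hvuq.2)
  · exact .inr ⟨Ne.symm hvuq.1, hadj⟩

/-- Were `u` and `w` attachments at distance at least two, the last neighbour of `u` on the way
through `K` to `w` would be linked at `u` to both neighbours of `u` on the cycle. -/
lemma IsChordlessCycleSet.isClique_attachments (hco : G.CyclicallyOrientable)
    (hC : IsChordlessCycleSet G C) (hK : (G.induce K).Preconnected) (hKC : Disjoint K C) :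
    G.IsClique (attachments G K C) := by
  rintro u ⟨hu, k, hk, huk⟩ w ⟨hw, k', hk', hwk'⟩ huw
  by_contra hadj
  have hfar : Gᶜ.Adj u w := ⟨huw, hadj⟩
  rw [preconnected_induce_iff_reachableWithin] at hK
  have hne : ∀ a ∈ K, ∀ b ∈ C, a ≠ b := fun a ha b hb => hKC.ne_of_mem ha hb
  obtain ⟨p, q, -, -, -, hpq, -, hN⟩ := hC.exists_path hu
  have hp : G.Adj u p ∧ p ∈ C := hN.superset (by simp)
  have hq : G.Adj u q ∧ q ∈ C := hN.superset (by simp)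
  obtain ⟨z, huz, hzK, hzk'⟩ := (hK k hk k' hk').exists_last (A := G.neighborSet u) huk
  replace hzk' := hzk'.mono (B := insert z (Gᶜ.neighborSet u)) <|
    Set.insert_subset_insert fun v hv => ⟨(hne v hv.1 u hu).symm, hv.2⟩
  have hzw := hzk'.trans (.of_adj hwk'.symm hzk'.right_mem (.inr hfar))
  have hpw := hC.reachableWithin_of_compl_adj hw hfar hN hpq
  have hqw := hC.reachableWithin_of_compl_adj hw hfar (Set.pair_comm p q ▸ hN) hpq.symm
  exact Linked.not_pairwise hco huz hp.1 hq.1 (hne z hzK p hp.2) (hne z hzK q hq.2) hpq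
    ⟨.of_reachableWithin hzw hpw, .of_reachableWithin hzw hqw, .of_reachableWithin hpw hqw⟩

/-- For a triangle `a b c`, look at the last vertex `z` adjacent to `a` or `b` on a walk through `K`
to a neighbour of `c`. If `z` is adjacent to `a`, then the last neighbour of `b` on the way to `z`
is linked at `b` to both `a` and `c`. -/
lemma cliqueFreeOn_attachments_compl (hco : G.CyclicallyOrientable)
    (hK : (G.induce K).Preconnected) : G.CliqueFreeOn (attachments G K Kᶜ) 3 := by
  classical
  intro s hs hclique
  obtain ⟨a, b, c, hab, hac, hbc, rfl⟩ := is3Clique_iff.1 hclique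
  obtain ⟨haK, ka, hka, haka⟩ : a ∈ attachments G K Kᶜ := hs (by simp)
  obtain ⟨hbK, kb, hkb, hbkb⟩ : b ∈ attachments G K Kᶜ := hs (by simp)
  obtain ⟨hcK, kc, hkc, hckc⟩ : c ∈ attachments G K Kᶜ := hs (by simp)
  rw [preconnected_induce_iff_reachableWithin] at hK
  obtain ⟨z, hz, hzK, hzkc⟩ :=
    (hK ka hka kc hkc).exists_last (A := G.neighborSet a ∪ G.neighborSet b) (.inl haka)
  clear hs hclique
  wlog haz : G.Adj a z generalizing a b ka kb
  · exact this b a hab.symm hbc hac hbK kb hkb hbkb haK ka hka haka hz.symm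
      (Set.union_comm _ _ ▸ hzkc) (hz.resolve_left haz)
  obtain ⟨t, hbt, htK, htz⟩ := (hK kb hkb z hzK).exists_last (A := G.neighborSet b) hbkb
  have hfar : ∀ v ∈ K, ¬ G.Adj b v → v ∈ Gᶜ.neighborSet b :=
    fun v hv hbv => ⟨fun h => hbK (h ▸ hv), hbv⟩
  replace htz := htz.mono (B := insert t (Gᶜ.neighborSet b)) <|
    Set.insert_subset_insert fun v hv => hfar v hv.1 hv.2
  have htkc := htz.trans <| hzkc.mono <| Set.insert_subset htz.right_mem fun v hv =>
    .inr (hfar v hv.1 fun h => hv.2 (.inr h))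
  have hta : Linked G b t a :=
    (htz.mono (by grind)).trans (.of_adj haz.symm (by grind [htz.right_mem]) (by grind))
  have htc : Linked G b t c :=
    (htkc.mono (by grind)).trans (.of_adj hckc.symm (by grind [htkc.right_mem]) (by grind))
  have hac' : Linked G b a c := .of_adj hac (by simp) (by simp)
  exact Linked.not_pairwise hco hbt hab.symm hbc (fun h => haK (h ▸ htK)) (fun h => hcK (h ▸ htK))
    hac.ne ⟨hta, htc, hac'⟩

end CyclicallyOrientable

/-- A connected set off `S` attaches to `S` at most along one edge of `G`: its attachments are
pairwise adjacent and there are at most two of them, the latter being phrased as the absence of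
triangles. -/
def EdgeAttached (G : SimpleGraph V) (S : Set V) : Prop :=
  ∀ K, (G.induce K).Preconnected → Disjoint K S →
    G.IsClique (attachments G K S) ∧ G.CliqueFreeOn (attachments G K S) 3

lemma edgeAttached_empty : EdgeAttached G ∅ := fun K _ _ => by
  simp [attachments]

lemma edgeAttached_pair {x y : V} (hxy : G.IsClique {x, y}) : EdgeAttached G {x, y} := by
  classical
  intro K _ _
  have hsub : attachments G K {x, y} ⊆ {x, y} := Set.sep_subset _ _
  have hfree : G.CliqueFreeOn ({x, y} : Finset V) 3 :=
    cliqueFreeOn_of_card_lt _ (Nat.lt_succ_of_le Finset.card_le_two)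
  rw [Finset.coe_pair] at hfree
  exact ⟨hxy.subset hsub, hfree.subset _ hsub⟩

lemma IsChordlessCycleSet.edgeAttached {C : Set V} (hco : G.CyclicallyOrientable)
    (hC : IsChordlessCycleSet G C) : EdgeAttached G C := by
  refine fun K hK hKC => ⟨hC.isClique_attachments hco hK hKC, ?_⟩
  refine (cliqueFreeOn_attachments_compl hco hK).subset _ ?_
  exact fun s hs => ⟨fun h => hKC.ne_of_mem h hs.1 rfl, hs.2⟩

/-- `K` is the vertex set of a connected component of `G` minus `S`. -/
structure IsComponentOff (G : SimpleGraph V) (S K : Set V) : Prop where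
  nonempty : K.Nonempty
  preconnected : (G.induce K).Preconnected
  disjoint : Disjoint K S
  mem_of_adj : ∀ ⦃a b⦄, a ∈ K → G.Adj a b → b ∉ S → b ∈ K

section Ears

variable {S K C A : Set V}

lemma exists_isComponentOff (hS : S ≠ Set.univ) : ∃ K, IsComponentOff G S K := by
  classical
  obtain ⟨v, hv⟩ := (Set.ne_univ_iff_exists_notMem S).1 hS
  refine ⟨{w | ReachableWithin G Sᶜ v w}, ⟨v, .refl hv⟩, ?_, ?_, ?_⟩
  · rw [preconnected_induce_iff_reachableWithin]
    suffices ∀ w, ReachableWithin G Sᶜ v w →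
        ReachableWithin G {w | ReachableWithin G Sᶜ v w} v w from
      fun x hx y hy => (this x hx).symm.trans (this y hy)
    rintro w ⟨p, hp⟩
    exact ⟨p, fun x hx => ⟨p.takeUntil x hx,
      fun y hy => hp y (p.support_takeUntil_subset_support hx hy)⟩⟩
  · exact Set.disjoint_left.2 fun w hw => hw.right_mem
  · exact fun a b ha hab hb => ha.trans (.of_adj hab ha.right_mem hb)

namespace IsComponentOff

lemma notMem {v : V} (hK : IsComponentOff G S K) (hv : v ∈ K) : v ∉ S :=
  Set.disjoint_left.1 hK.disjoint hv

lemma subset_of_preconnected {L : Set V} (hK : IsComponentOff G S K)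
    (hL : (G.induce L).Preconnected) (hLS : Disjoint L S) (hLK : ¬ Disjoint L K) : L ⊆ K := by
  obtain ⟨a, haL, haK⟩ := Set.not_disjoint_iff.1 hLK
  rw [preconnected_induce_iff_reachableWithin] at hL
  exact fun b hb => (hL a haL b hb).mem_of_adj_closed
    (fun s hs t ht hst => hK.mem_of_adj hs hst (Set.disjoint_left.1 hLS ht)) haK

lemma edgeAttached_union (hK : IsComponentOff G S K) (hS : EdgeAttached G S)
    (hC : EdgeAttached G C) (hSC : attachments G K S ⊆ C) (hCK : C \ S ⊆ K) :
    EdgeAttached G (S ∪ C) := by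
  intro L hL hLSC
  obtain ⟨hLS, hLC⟩ := Set.disjoint_union_right.1 hLSC
  by_cases hLK : Disjoint L K
  · have hsub : attachments G L (S ∪ C) ⊆ attachments G L S := by
      rintro s ⟨hs, l, hl, hsl⟩
      refine ⟨by_contra fun hsS => ?_, l, hl, hsl⟩
      have hsK := hCK ⟨hs.resolve_left hsS, hsS⟩
      exact hLK.ne_of_mem hl (hK.mem_of_adj hsK hsl (Set.disjoint_left.1 hLS hl)) rfl
    exact ⟨(hS L hL hLS).1.subset hsub, (hS L hL hLS).2.subset _ hsub⟩
  · have hLsub := hK.subset_of_preconnected hL hLS hLK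
    have hsub : attachments G L (S ∪ C) ⊆ attachments G L C := by
      rintro s ⟨hs, l, hl, hsl⟩
      exact ⟨hs.elim (fun hsS => hSC ⟨hsS, l, hLsub hl, hsl⟩) id, l, hl, hsl⟩
    exact ⟨(hC L hL hLC).1.subset hsub, (hC L hL hLC).2.subset _ hsub⟩

/-- The attachments of `K` form a clique, and deleting a clique does not disconnect the cycle. -/
lemma isChordlessCycleSet_subset_or_subset (hK : IsComponentOff G S K)
    (hclique : G.IsClique (attachments G K S)) (hSC : attachments G K S ⊆ C) (hCK : C \ S ⊆ K)
    (hA : IsChordlessCycleSet G A) (hASC : A ⊆ S ∪ C) : A ⊆ S ∨ A ⊆ C := by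
  by_cases hAK : Disjoint A K
  · refine .inl fun a ha => by_contra fun haS => ?_
    exact hAK.ne_of_mem ha (hCK ⟨(hASC ha).resolve_left haS, haS⟩) rfl
  right
  obtain ⟨a, haA, haK⟩ := Set.not_disjoint_iff.1 hAK
  have hconn := hA.preconnected_induce_sdiff hclique
  rw [preconnected_induce_iff_reachableWithin] at hconn
  intro b hbA
  by_cases hb : b ∈ attachments G K S
  · exact hSC hb
  have hbK : b ∈ K := by
    refine (hconn a ⟨haA, fun h => hK.notMem haK h.1⟩ b ⟨hbA, hb⟩).mem_of_adj_closed ?_ haK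
    exact fun s hs t ht hst => hK.mem_of_adj hs hst fun htS => ht.2 ⟨htS, s, hs, hst.symm⟩
  exact (hASC hbA).resolve_left (hK.notMem hbK)

lemma exists_isClique_pair (hK : IsComponentOff G S K)
    (hSK : (attachments G K S).Subsingleton) :
    ∃ x y, G.IsClique {x, y} ∧ attachments G K S ⊆ {x, y} ∧ {x, y} \ S ⊆ K ∧
      ¬ {x, y} ⊆ S := by
  rcases (attachments G K S).eq_empty_or_nonempty with hempty | ⟨x, hx⟩
  · obtain ⟨k, hk⟩ := hK.nonempty
    exact ⟨k, k, by simp, by simp [hempty], by grind, by grind [hK.notMem hk]⟩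
  · obtain ⟨hxS, k, hk, hxk⟩ := id hx
    exact ⟨x, k, isClique_pair.2 fun _ => hxk, fun y hy => .inl (hSK hy hx), by grind,
      by grind [hK.notMem hk]⟩

end IsComponentOff

lemma exists_isChordlessCycleSet_of_adj {x y : V} (hK : (G.induce K).Preconnected)
    (hx : x ∈ attachments G K Kᶜ) (hy : y ∈ attachments G K Kᶜ) (hxy : G.Adj x y) :
    ∃ C, IsChordlessCycleSet G C ∧ x ∈ C ∧ y ∈ C ∧ C ⊆ {x, y} ∪ K := by
  obtain ⟨hxK, k, hk, hxk⟩ := hx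
  obtain ⟨hyK, k', hk', hyk'⟩ := hy
  obtain ⟨p, hp⟩ := preconnected_induce_iff_reachableWithin.1 hK k' hk' k hk
  have hxp : x ∉ p.support := fun h => hxK (hp x h)
  have hedge : s(x, y) ∉ (Walk.cons hyk' (p.concat hxk.symm)).edges := by
    have := mt (p.fst_mem_support_of_mem_edges (t := x) (u := y)) hxp
    have := hxy.ne
    have : y ≠ k := fun h => hyK (h ▸ hk)
    grind [Walk.edges_cons, Walk.edges_concat]
  obtain ⟨q, hqp, hq⟩ := exists_isChordlessCycle_cons hxy _ hedge
  refine ⟨_, ⟨x, _, hq, rfl⟩, by simp, by simp, fun w hw => ?_⟩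
  have := @hqp w
  grind [Walk.mem_verts_toSubgraph, Walk.support_cons, Walk.support_concat]

lemma attachments_eq_pair {x y : V} (hclique : G.IsClique (attachments G K S))
    (hfree : G.CliqueFreeOn (attachments G K S) 3) (hx : x ∈ attachments G K S)
    (hy : y ∈ attachments G K S) (hxy : x ≠ y) : attachments G K S = {x, y} := by
  classical
  refine (Set.pair_subset hx hy).antisymm' fun z hz => by_contra fun hzxy => ?_
  simp only [Set.mem_insert_iff, Set.mem_singleton_iff, not_or] at hzxy
  refine hfree (t := {x, y, z}) (by simp [Set.insert_subset_iff, hx, hy, hz]) ?_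
  exact is3Clique_iff.2 ⟨x, y, z, hclique hx hy hxy, hclique hx hz (Ne.symm hzxy.1),
    hclique hy hz (Ne.symm hzxy.2), rfl⟩

/-- The vertex sets of the chordless cycles of `G` inside `S`. -/
def chordlessCycleSets (G : SimpleGraph V) (S : Set V) : Set (Set V) :=
  {A | A ⊆ S ∧ IsChordlessCycleSet G A}

namespace IsComponentOff

lemma exists_pair_extension (hK : IsComponentOff G S K) (hS : EdgeAttached G S)
    (hSK : (attachments G K S).Subsingleton) :
    ∃ S', S ⊂ S' ∧ EdgeAttached G S' ∧ chordlessCycleSets G S' ⊆ chordlessCycleSets G S := by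
  obtain ⟨x, y, hxy, hsub, hdiff, hnot⟩ := hK.exists_isClique_pair hSK
  refine ⟨S ∪ {x, y}, ?_, hK.edgeAttached_union hS (edgeAttached_pair hxy) hsub hdiff, ?_⟩
  · exact Set.subset_union_left.ssubset_of_not_subset fun h => hnot (Set.union_subset_iff.1 h).2
  · rintro A ⟨hA, hAcyc⟩
    have := hK.isChordlessCycleSet_subset_or_subset (hxy.subset hsub) hsub hdiff hAcyc hA
    exact ⟨this.resolve_right hAcyc.not_subset_pair, hAcyc⟩

lemma exists_cycle_extension (hco : G.CyclicallyOrientable) (hK : IsComponentOff G S K)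
    (hS : EdgeAttached G S) (hSK : (attachments G K S).Nontrivial) :
    ∃ S' C, S ⊂ S' ∧ EdgeAttached G S' ∧
      chordlessCycleSets G S' ⊆ insert C (chordlessCycleSets G S) := by
  obtain ⟨x, hx, y, hy, hxy⟩ := hSK
  obtain ⟨hclique, hfree⟩ := hS K hK.preconnected hK.disjoint
  have hpair := attachments_eq_pair hclique hfree hx hy hxy
  have hcompl : attachments G K S ⊆ attachments G K Kᶜ :=
    fun s hs => ⟨fun h => hK.notMem h hs.1, hs.2⟩
  obtain ⟨C, hC, hxC, hyC, hCsub⟩ := exists_isChordlessCycleSet_of_adj hK.preconnected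
    (hcompl hx) (hcompl hy) (hclique hx hy hxy)
  have hSC : attachments G K S ⊆ C := hpair ▸ Set.pair_subset hxC hyC
  have hCK : C \ S ⊆ K := by
    rintro c ⟨hc, hcS⟩
    refine (hCsub hc).resolve_left fun h => hcS ?_
    exact (hpair.superset h).1
  have hCS : ¬ C ⊆ S := fun h => hC.not_subset_pair fun c hc =>
    (hCsub hc).resolve_right fun hcK => hK.notMem hcK (h hc)
  refine ⟨S ∪ C, C, ?_, hK.edgeAttached_union hS (hC.edgeAttached hco) hSC hCK, ?_⟩
  · exact Set.subset_union_left.ssubset_of_not_subset fun h => hCS (Set.union_subset_iff.1 h).2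
  · rintro A ⟨hA, hAcyc⟩
    rcases hK.isChordlessCycleSet_subset_or_subset hclique hSC hCK hAcyc hA with hAS | hAC
    · exact .inr ⟨hAS, hAcyc⟩
    · exact .inl (hAcyc.eq_of_subset hC hAC)

end IsComponentOff

lemma EdgeAttached.exists_ssuperset [Finite V] (hco : G.CyclicallyOrientable)
    (hS : EdgeAttached G S) (hne : S ≠ Set.univ)
    (hcard : (chordlessCycleSets G S).ncard ≤ S.ncard - 2) :
    ∃ S', S ⊂ S' ∧ EdgeAttached G S' ∧ (chordlessCycleSets G S').ncard ≤ S'.ncard - 2 := by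
  obtain ⟨K, hK⟩ := exists_isComponentOff (G := G) hne
  rcases (attachments G K S).subsingleton_or_nontrivial with hSK | hSK
  · obtain ⟨S', hlt, hS', hcycles⟩ := hK.exists_pair_extension hS hSK
    have := Set.ncard_le_ncard hcycles
    have := Set.ncard_lt_ncard hlt
    exact ⟨S', hlt, hS', by omega⟩
  · obtain ⟨S', C, hlt, hS', hcycles⟩ := hK.exists_cycle_extension hco hS hSK
    have := (Set.ncard_le_ncard hcycles).trans (Set.ncard_insert_le _ _)
    have := Set.ncard_lt_ncard hlt
    have := Set.one_lt_ncard_iff_nontrivial.2 (hSK.mono (Set.sep_subset _ _))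
    exact ⟨S', hlt, hS', by omega⟩

end Ears

lemma ncard_chordlessCycleSets_univ_le [Finite V] (hco : G.CyclicallyOrientable) :
    (chordlessCycleSets G Set.univ).ncard ≤ Nat.card V - 2 := by
  let P : Set (Set V) :=
    {S | EdgeAttached G S ∧ (chordlessCycleSets G S).ncard ≤ S.ncard - 2}
  have hempty : ∅ ∈ P := by
    have : chordlessCycleSets G ∅ = ∅ := Set.eq_empty_of_forall_notMem fun A hA =>
      (hA.2.nonempty.mono hA.1).ne_empty rfl
    simp [P, edgeAttached_empty, this]
  obtain ⟨S, ⟨hS, hcard⟩, hmax⟩ := P.toFinite.exists_maximal ⟨∅, hempty⟩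
  have huniv : S = Set.univ := by
    by_contra hne
    obtain ⟨S', hlt, hS'⟩ := hS.exists_ssuperset hco hne hcard
    exact hlt.2 (hmax hS' hlt.1)
  rwa [huniv, Set.ncard_univ] at hcard

lemma ncard_chordlessCycles_eq :
    {H : G.Subgraph | ∃ (v : V) (c : G.Walk v v), c.IsChordlessCycle ∧ c.toSubgraph = H}.ncard =
      (chordlessCycleSets G Set.univ).ncard := by
  refine Set.ncard_congr (fun H _ => H.verts) ?_ ?_ ?_
  · rintro _ ⟨v, c, hc, rfl⟩
    exact ⟨Set.subset_univ _, v, c, hc, rfl⟩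
  · rintro _ _ ⟨v, c, hc, rfl⟩ ⟨v', c', hc', rfl⟩ hverts
    rw [← (isInduced_toSubgraph_of_isChordlessCycle hc).induce_top_verts, hverts,
      (isInduced_toSubgraph_of_isChordlessCycle hc').induce_top_verts]
  · rintro _ ⟨-, v, c, hc, rfl⟩
    exact ⟨_, ⟨v, c, hc, rfl⟩, rfl⟩

theorem twoConnected_co_chordlessCycle_count_general {V : Type*} [Finite V] [Nontrivial V]
    (G : SimpleGraph V) (hco : G.CyclicallyOrientable) :
    {H : G.Subgraph | ∃ (v : V) (c : G.Walk v v),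
      c.IsChordlessCycle ∧ c.toSubgraph = H}.ncard + 2 ≤ Nat.card V := by
  have hV : 1 < Nat.card V := Finite.one_lt_card
  have := ncard_chordlessCycleSets_univ_le hco
  rw [ncard_chordlessCycles_eq]
  omega

/-- A two-connected cyclically orientable finite simple graph with
`n ≥ 3` vertices has at most `n - 2` chordless cycles (counted up to equality of
the underlying subgraph, i.e. of vertex and edge sets). -/
theorem twoConnected_co_chordlessCycle_count {V : Type*} [Fintype V]
    (G : SimpleGraph V) (h2 : G.IsTwoConnected) (hco : G.CyclicallyOrientable)
    (hn : 3 ≤ Fintype.card V) :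
    {H : G.Subgraph | ∃ (v : V) (c : G.Walk v v),
      c.IsChordlessCycle ∧ c.toSubgraph = H}.ncard ≤ Fintype.card V - 2 := by
  have : Nontrivial V := Fintype.one_lt_card_iff_nontrivial.1 (by omega)
  have := twoConnected_co_chordlessCycle_count_general G hco
  rw [Nat.card_eq_fintype_card] at this
  exact Nat.le_sub_of_add_le this
end

section
/- Let G be a cyclically orientable finite simple graph with n vertices, where n ≥ 2. Then the number of chordless cycles of G is at most n − 2; in particular, the number of chordless cycles of a cyclically orientable graph is polynomial in the number of vertices. -/
/-!
A chordless cycle is an induced subgraph, so it suffices to count the vertex sets of chordless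
cycles. In a cyclic orientation, of two edges that are consecutive on a chordless cycle one enters
and the other leaves their common vertex; hence three edges at a vertex cannot be pairwise
consecutive on chordless cycles.

It follows that a connected set `K` disjoint from a chordless cycle `C` has all its neighbors on
`C` among the ends of one edge of `C`. Indeed, delete from `K` a vertex `p` that is not a cut
vertex. By induction the rest of `K` attaches to `C` only at the ends of an edge `xy`. If `K` does
not, then `p` has a neighbor `a` on `C` other than `x` and `y`, and `p` is the only neighbor of `a`
in `K`. Let `s` and `r` be the neighbors of `a` on `C`. If `K` has a neighbor on `C` off the edge
`as`, then `K ∪ (C \ {a, s})` is connected, and a shortest path in it from `p` to `r` closes up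
through `a` to a chordless cycle. Were `K` to attach off both `as` and `ar`, the edges `ap`, `as`,
`ar` would be pairwise consecutive on chordless cycles, `C` being the third of them.

Therefore a vertex set `W` that properly contains a chordless cycle is the union of two proper
subsets `A` and `B` glued along an edge. No chordless cycle crosses this edge, so the bounds
`|A| - 2` and `|B| - 2` add up to `|A| + |B| - 4 = |W| - 2`.
-/

open SimpleGraph

variable {V : Type*}

namespace ChordlessCycles

variable {G : SimpleGraph V}

lemma isChordless_of_length_eq_dist {u v : V} {p : G.Walk u v} (hp : p.length = G.dist u v) :
    p.IsChordless := by
  have consecutive_of_adj : ∀ i j, i < j → j ≤ p.length → G.Adj (p.getVert i) (p.getVert j) →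
      s(p.getVert i, p.getVert j) ∈ p.edges := by
    intro i j hij hj hadj
    have shortcut := dist_le ((p.take i).append (.cons hadj (p.drop j)))
    rw [Walk.length_append, Walk.length_cons, Walk.take_length, Walk.drop_length] at shortcut
    obtain rfl : j = i + 1 := by omega
    exact Walk.adj_toSubgraph_iff_mem_edges.1 (p.toSubgraph_adj_getVert (by omega))
  rw [Walk.isChordless_iff_forall_mem_edges]
  intro x y hx hy hxy
  obtain ⟨i, rfl, hi⟩ := Walk.mem_support_iff_exists_getVert.1 hx
  obtain ⟨j, rfl, hj⟩ := Walk.mem_support_iff_exists_getVert.1 hy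
  rcases lt_trichotomy i j with hij | rfl | hji
  · exact consecutive_of_adj i j hij hj hxy
  · exact absurd hxy G.irrefl
  · exact Sym2.eq_swap ▸ consecutive_of_adj j i hji hi hxy.symm

lemma isChordless_map {V' : Type*} {G' : SimpleGraph V'} (f : G ↪g G') {u v : V} {p : G.Walk u v}
    (hp : p.IsChordless) : (p.map f.toHom).IsChordless := by
  rw [Walk.isChordless_iff_forall_mem_edges]
  simp only [Walk.support_map, List.mem_map, Walk.edges_map]
  rintro _ _ ⟨x, hx, rfl⟩ ⟨y, hy, rfl⟩ hxy
  exact ⟨s(x, y), hp.mem_edges hx hy (f.map_adj_iff.1 hxy), rfl⟩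

lemma exists_isPath_isChordless {T : Set V} (hT : (G.induce T).Preconnected) {p q : V} (hp : p ∈ T)
    (hq : q ∈ T) :
    ∃ w : G.Walk p q, w.IsPath ∧ w.IsChordless ∧ ∀ x ∈ w.support, x ∈ T := by
  obtain ⟨w, hw, hdist⟩ := (hT ⟨p, hp⟩ ⟨q, hq⟩).exists_path_of_dist
  let f : G.induce T ↪g G := Embedding.induce T
  have support_subset : ∀ x ∈ (w.map f.toHom).support, x ∈ T := by
    simp only [Walk.support_map, List.mem_map]
    rintro _ ⟨x, -, rfl⟩
    exact x.2
  exact ⟨w.map f.toHom, hw.map f.injective,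
    isChordless_map f (isChordless_of_length_eq_dist hdist), support_subset⟩

lemma subset_of_preconnected_induce {T U : Set V} (hT : (G.induce T).Preconnected)
    (hU : ∀ u ∈ U, ∀ t ∈ T, G.Adj u t → t ∈ U) {x : V} (hxT : x ∈ T) (hxU : x ∈ U) : T ⊆ U := by
  intro y hy
  obtain ⟨w⟩ := hT ⟨x, hxT⟩ ⟨y, hy⟩
  by_contra hyU
  obtain ⟨d, -, hfst, hsnd⟩ := w.exists_boundary_dart (Subtype.val ⁻¹' U) hxU hyU
  exact hsnd (hU _ hfst _ d.snd.2 d.adj)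

lemma preconnected_induce_image_val {X : Set V} {Y : Set X}
    (hY : ((G.induce X).induce Y).Preconnected) : (G.induce (Subtype.val '' Y)).Preconnected := by
  let f : (G.induce X).induce Y →g G.induce (Subtype.val '' Y) :=
    ⟨fun y => ⟨y, y, y.2, rfl⟩, id⟩
  refine hY.map f ?_
  rintro ⟨_, y, hy, rfl⟩
  exact ⟨⟨y, hy⟩, rfl⟩

lemma exists_preconnected_induce_diff_singleton {K : Set V} (hK : (G.induce K).Preconnected)
    (hfin : K.Finite) (hne : K.Nonempty) : ∃ p ∈ K, (G.induce (K \ {p})).Preconnected := by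
  have : Finite K := hfin
  have : Nonempty K := hne.to_subtype
  obtain ⟨p, hp⟩ :=
    Connected.exists_preconnected_induce_compl_singleton_of_finite (G := G.induce K) ⟨hK⟩
  have image_compl : Subtype.val '' ({p}ᶜ : Set K) = K \ {p.1} := by
    ext
    simp
  exact ⟨p, p.2, image_compl ▸ preconnected_induce_image_val hp⟩

lemma exists_preconnected_induce_closed {X : Set V} {x : V} (hx : x ∈ X) :
    ∃ K ⊆ X, x ∈ K ∧ (G.induce K).Preconnected ∧ ∀ k ∈ K, ∀ t ∈ X, G.Adj k t → t ∈ K := by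
  let c := (G.induce X).connectedComponentMk ⟨x, hx⟩
  refine ⟨Subtype.val '' c.supp, Subtype.coe_image_subset X _, ⟨⟨x, hx⟩, rfl, rfl⟩,
    preconnected_induce_image_val c.connected_toSimpleGraph.preconnected, ?_⟩
  rintro _ ⟨k, hk, rfl⟩ t ht hkt
  exact ⟨⟨t, ht⟩, c.mem_supp_of_adj_mem_supp hk hkt, rfl⟩

lemma preconnected_induce_support_diff_start {u v : V} {p : G.Walk u v} (hp : p.IsPath) :
    (G.induce ({x | x ∈ p.support} \ {u})).Preconnected := by
  cases p with
  | nil =>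
    have diff_eq : {x | x ∈ (Walk.nil : G.Walk u u).support} \ {u} = ∅ := by simp
    exact diff_eq ▸ .of_subsingleton
  | cons h q =>
    have hu := ((Walk.cons_isPath_iff h q).1 hp).2
    have diff_eq : {x | x ∈ (Walk.cons h q).support} \ {u} = {x | x ∈ q.support} := by
      ext x
      simp only [Walk.support_cons, List.mem_cons, Set.mem_sdiff, Set.mem_ofPred_eq,
        Set.mem_singleton_iff]
      grind
    exact diff_eq ▸ q.connected_induce_support.preconnected

lemma preconnected_induce_support_diff_ends {u v : V} {p : G.Walk u v} (hp : p.IsPath) :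
    (G.induce ({x | x ∈ p.support} \ {u, v})).Preconnected := by
  cases p with
  | nil =>
    have diff_eq : {x | x ∈ (Walk.nil : G.Walk u u).support} \ {u, u} = ∅ := by simp
    exact diff_eq ▸ .of_subsingleton
  | cons h q =>
    obtain ⟨hq, hu⟩ := (Walk.cons_isPath_iff h q).1 hp
    have diff_eq : {x | x ∈ (Walk.cons h q).support} \ {u, v} =
        {x | x ∈ q.reverse.support} \ {v} := by
      ext x
      simp only [Walk.support_cons, Walk.support_reverse, List.mem_cons, List.mem_reverse,
        Set.mem_sdiff, Set.mem_ofPred_eq, Set.mem_insert_iff, Set.mem_singleton_iff]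
      grind
    exact diff_eq ▸ preconnected_induce_support_diff_start hq.reverse

/-- `S` is the vertex set of a chordless cycle of `G`. Chordless cycles are induced subgraphs, so
counting them amounts to counting these sets. -/
def InducesCycle (G : SimpleGraph V) (S : Set V) : Prop :=
  ∃ (v : V) (c : G.Walk v v), c.IsChordlessCycle ∧ c.toSubgraph.verts = S

/-- Some chordless cycle of `G` passes through `p`, `a`, `q` in this order. As the cycle is induced,
adjacency of `a` to `p` and `q` makes `pa` and `aq` edges of it. -/
def ConsecutiveOnCycle (G : SimpleGraph V) (p a q : V) : Prop :=
  p ≠ q ∧ G.Adj a p ∧ G.Adj a q ∧ ∃ S, InducesCycle G S ∧ a ∈ S ∧ p ∈ S ∧ q ∈ S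

/-- The vertex sets `A` and `B` are glued along an edge of `G`: they overlap exactly in its ends,
and no edge joins `A \ B` to `B \ A`. Chordless cycles are counted separately on the two sides. -/
structure IsEdgeSeparation (G : SimpleGraph V) (A B : Set V) : Prop where
  exists_inter_eq_pair : ∃ a b, G.Adj a b ∧ A ∩ B = {a, b}
  not_adj : ∀ ⦃x⦄, x ∈ A \ B → ∀ ⦃y⦄, y ∈ B \ A → ¬ G.Adj x y

lemma isChordlessCycle_iff_isCycle_and_isInduced {v : V} {c : G.Walk v v} :
    c.IsChordlessCycle ↔ c.IsCycle ∧ c.toSubgraph.IsInduced := by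
  rw [Walk.isInduced_toSubgraph, Walk.isChordless_iff_forall_mem_edges]
  rfl

lemma isChordlessCycle_cons_concat {a p q : V} {w : G.Walk p q} (hw : w.IsPath)
    (hchord : w.IsChordless) (ha : a ∉ w.support) (hpq : p ≠ q) (hap : G.Adj a p)
    (hqa : G.Adj q a) (hn : ∀ t ∈ w.support, G.Adj a t → t = p ∨ t = q) :
    (Walk.cons hap (w.concat hqa)).IsChordlessCycle := by
  have mem_support : ∀ x, x ∈ (Walk.cons hap (w.concat hqa)).support ↔ x = a ∨ x ∈ w.support := by
    simp [Walk.support_concat, or_comm]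
  have mem_edges : ∀ e, e ∈ (Walk.cons hap (w.concat hqa)).edges ↔
      e = s(a, p) ∨ e ∈ w.edges ∨ e = s(q, a) := by
    simp [Walk.edges_concat]
  have notMem_edges : s(a, p) ∉ (w.concat hqa).edges := by
    simp only [Walk.edges_concat, List.concat_eq_append, List.mem_append, List.mem_singleton,
      Sym2.eq_iff, not_or, not_and]
    exact ⟨fun h => ha (w.fst_mem_support_of_mem_edges h), fun h => absurd h hqa.ne',
      fun _ h => hpq h⟩
  refine ⟨(Walk.cons_isCycle_iff _ hap).2 ⟨hw.concat ha hqa, notMem_edges⟩, ?_⟩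
  intro x y hx hy hxy
  rw [mem_support] at hx hy
  rw [mem_edges]
  rcases hx with rfl | hx <;> rcases hy with rfl | hy
  · exact absurd hxy G.irrefl
  · rcases hn y hy hxy with rfl | rfl
    exacts [.inl rfl, .inr (.inr Sym2.eq_swap)]
  · rcases hn x hx hxy.symm with rfl | rfl
    exacts [.inl Sym2.eq_swap, .inr (.inr rfl)]
  · exact .inr (.inl (hchord.mem_edges hx hy hxy))

lemma ConsecutiveOnCycle.of_preconnected_induce {T : Set V} (hT : (G.induce T).Preconnected)
    {a p q : V} (ha : a ∉ T) (hp : p ∈ T) (hq : q ∈ T) (hpq : p ≠ q) (hap : G.Adj a p)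
    (haq : G.Adj a q) (hn : T ∩ G.neighborSet a ⊆ {p, q}) : ConsecutiveOnCycle G p a q := by
  obtain ⟨w, hw, hchord, hwT⟩ := exists_isPath_isChordless hT hp hq
  have hc := isChordlessCycle_cons_concat hw hchord (fun h => ha (hwT a h)) hpq hap haq.symm
    fun t ht hat => hn ⟨hwT t ht, hat⟩
  refine ⟨hpq, hap, haq, _, ⟨a, _, hc, rfl⟩, ?_, ?_, ?_⟩ <;> simp

namespace InducesCycle

variable {S : Set V}

lemma finite (hS : InducesCycle G S) : S.Finite := by
  obtain ⟨v, c, -, rfl⟩ := hS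
  rw [Walk.verts_toSubgraph]
  exact List.finite_toSet _

lemma nonempty (hS : InducesCycle G S) : S.Nonempty := by
  obtain ⟨v, c, -, rfl⟩ := hS
  exact ⟨v, c.start_mem_verts_toSubgraph⟩

lemma preconnected_induce (hS : InducesCycle G S) : (G.induce S).Preconnected := by
  obtain ⟨v, c, -, rfl⟩ := hS
  exact c.toSubgraph_connected.induce_verts.preconnected

lemma ncard_inter_neighborSet (hS : InducesCycle G S) {a : V} (ha : a ∈ S) :
    (S ∩ G.neighborSet a).ncard = 2 := by
  obtain ⟨v, c, hc, rfl⟩ := hS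
  obtain ⟨hcycle, hind⟩ := isChordlessCycle_iff_isCycle_and_isInduced.1 hc
  have neighborSet_eq : c.toSubgraph.neighborSet a = c.toSubgraph.verts ∩ G.neighborSet a := by
    ext t
    exact ⟨fun h => ⟨h.snd_mem, h.adj_sub⟩, fun h => hind ha h.1 h.2⟩
  rw [← neighborSet_eq]
  exact hcycle.ncard_neighborSet_toSubgraph_eq_two (c.mem_verts_toSubgraph.1 ha)

lemma exists_inter_neighborSet_eq_pair (hS : InducesCycle G S) {a : V} (ha : a ∈ S) :
    ∃ p q, p ≠ q ∧ S ∩ G.neighborSet a = {p, q} :=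
  Set.ncard_eq_two.1 (hS.ncard_inter_neighborSet ha)

lemma exists_adj (hS : InducesCycle G S) {a : V} (ha : a ∈ S) : ∃ b ∈ S, G.Adj a b :=
  Set.nonempty_of_ncard_ne_zero (hS.ncard_inter_neighborSet ha ▸ two_ne_zero)

lemma exists_isChordlessCycle_snd_eq (hS : InducesCycle G S) {a b : V} (ha : a ∈ S) (hb : b ∈ S)
    (hab : G.Adj a b) :
    ∃ c : G.Walk a a, c.IsChordlessCycle ∧ c.snd = b ∧ c.toSubgraph.verts = S := by
  classical
  obtain ⟨v, c₀, hc₀, rfl⟩ := hS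
  let c := c₀.rotate a (c₀.mem_verts_toSubgraph.1 ha)
  have toSubgraph_eq : c.toSubgraph = c₀.toSubgraph := c₀.toSubgraph_rotate _
  obtain ⟨hcycle₀, hind⟩ := isChordlessCycle_iff_isCycle_and_isInduced.1 hc₀
  rw [← toSubgraph_eq] at ha hb hind ⊢
  have hcycle : c.IsCycle := hcycle₀.rotate _
  have hb' : b ∈ c.toSubgraph.neighborSet a := hind ha hb hab
  rw [hcycle.neighborSet_toSubgraph_endpoint] at hb'
  rcases hb' with rfl | rfl
  · exact ⟨c, isChordlessCycle_iff_isCycle_and_isInduced.2 ⟨hcycle, hind⟩, rfl, rfl⟩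
  · exact ⟨c.reverse, isChordlessCycle_iff_isCycle_and_isInduced.2
      ⟨hcycle.reverse, c.toSubgraph_reverse.symm ▸ hind⟩, c.snd_reverse,
      by rw [c.toSubgraph_reverse]⟩

lemma exists_isPath_support_eq (hS : InducesCycle G S) {a b : V} (ha : a ∈ S) (hb : b ∈ S)
    (hab : G.Adj a b) : ∃ p : G.Walk a b, p.IsPath ∧ {x | x ∈ p.support} = S := by
  obtain ⟨c, ⟨hcycle, -⟩, rfl, rfl⟩ := hS.exists_isChordlessCycle_snd_eq ha hb hab
  refine ⟨c.tail.reverse, hcycle.isPath_tail.reverse, ?_⟩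
  ext x
  have start_mem_tail : a ∈ c.tail.support := c.tail.end_mem_support
  rw [Set.mem_ofPred_eq, Walk.support_reverse, List.mem_reverse, Walk.mem_verts_toSubgraph,
    ← Walk.cons_support_tail hcycle.not_nil, List.mem_cons]
  exact ⟨.inr, fun h => h.elim (· ▸ start_mem_tail) id⟩

lemma preconnected_induce_diff_singleton (hS : InducesCycle G S) (a : V) :
    (G.induce (S \ {a})).Preconnected := by
  by_cases ha : a ∈ S
  · obtain ⟨b, hb, hab⟩ := hS.exists_adj ha
    obtain ⟨p, hp, rfl⟩ := hS.exists_isPath_support_eq ha hb hab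
    exact preconnected_induce_support_diff_start hp
  · rw [Set.sdiff_singleton_eq_self ha]
    exact hS.preconnected_induce

lemma preconnected_induce_diff_pair (hS : InducesCycle G S) {a b : V} (hab : G.Adj a b) :
    (G.induce (S \ {a, b})).Preconnected := by
  by_cases ha : a ∈ S
  · by_cases hb : b ∈ S
    · obtain ⟨p, hp, rfl⟩ := hS.exists_isPath_support_eq ha hb hab
      exact preconnected_induce_support_diff_ends hp
    · rw [Set.pair_comm, Set.sdiff_insert_of_notMem hb]
      exact hS.preconnected_induce_diff_singleton a
  · rw [Set.sdiff_insert_of_notMem ha]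
    exact hS.preconnected_induce_diff_singleton b

lemma three_le_ncard (hS : InducesCycle G S) : 3 ≤ S.ncard := by
  obtain ⟨a, ha⟩ := hS.nonempty
  have insert_subset : insert a (S ∩ G.neighborSet a) ⊆ S :=
    Set.insert_subset ha Set.inter_subset_left
  have := Set.ncard_le_ncard insert_subset hS.finite
  rwa [Set.ncard_insert_of_notMem (by simp) (hS.finite.subset Set.inter_subset_left),
    hS.ncard_inter_neighborSet ha] at this

lemma eq_of_subset {C : Set V} (hS : InducesCycle G S) (hC : InducesCycle G C) (h : S ⊆ C) :
    S = C := by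
  obtain ⟨x, hx⟩ := hS.nonempty
  refine h.antisymm (subset_of_preconnected_induce hC.preconnected_induce ?_ (h hx) hx)
  intro u hu t ht hut
  have neighbors_eq : S ∩ G.neighborSet u = C ∩ G.neighborSet u :=
    Set.eq_of_subset_of_ncard_le (Set.inter_subset_inter_left _ h)
      (by rw [hS.ncard_inter_neighborSet hu, hC.ncard_inter_neighborSet (h hu)])
      (hC.finite.subset Set.inter_subset_left)
  exact (neighbors_eq.ge ⟨ht, hut⟩).1

lemma subset_or_subset_of_isEdgeSeparation (hS : InducesCycle G S) {A B : Set V}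
    (hAB : IsEdgeSeparation G A B) (hSAB : S ⊆ A ∪ B) : S ⊆ A ∨ S ⊆ B := by
  obtain ⟨a, b, hab, inter_eq⟩ := hAB.exists_inter_eq_pair
  by_cases hSB : S ⊆ B
  · exact .inr hSB
  obtain ⟨x, hxS, hxB⟩ := Set.not_subset.1 hSB
  have hx : x ∈ A \ B := ⟨(hSAB hxS).resolve_right hxB, hxB⟩
  have diff_subset : S \ (A ∩ B) ⊆ A \ B := by
    refine subset_of_preconnected_induce (inter_eq ▸ hS.preconnected_induce_diff_pair hab) ?_
      ⟨hxS, fun h => hxB h.2⟩ hx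
    intro u hu t ht hut
    have htA : t ∈ A := by_contra fun htA =>
      hAB.not_adj hu ⟨(hSAB ht.1).resolve_left htA, htA⟩ hut
    exact ⟨htA, fun htB => ht.2 ⟨htA, htB⟩⟩
  left
  intro y hy
  by_cases hyAB : y ∈ A ∩ B
  exacts [hyAB.1, (diff_subset ⟨hy, hyAB⟩).1]

end InducesCycle

lemma ConsecutiveOnCycle.dir_iff_not_dir {o : G.Orientation}
    (ho : ∀ (v : V) (c : G.Walk v v), c.IsChordlessCycle → o.IsCyclicOn c) {p a q : V}
    (h : ConsecutiveOnCycle G p a q) : o.dir p a ↔ ¬ o.dir q a := by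
  obtain ⟨hpq, hap, haq, S, hS, ha, hp, hq⟩ := h
  obtain ⟨c, hc, rfl, rfl⟩ := hS.exists_isChordlessCycle_snd_eq ha hp hap
  obtain ⟨hcycle, hind⟩ := isChordlessCycle_iff_isCycle_and_isInduced.1 hc
  have hq' : q ∈ c.toSubgraph.neighborSet a := hind ha hq haq
  rw [hcycle.neighborSet_toSubgraph_endpoint] at hq'
  obtain rfl : q = c.penultimate := hq'.resolve_left hpq.symm
  have dir_snd := o.adj_iff_dir _ _ hap
  have dir_penultimate := o.adj_iff_dir _ _ haq
  have first_mem := c.firstDart_mem_darts hcycle.not_nil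
  have last_mem := c.lastDart_mem_darts hcycle.not_nil
  rcases ho a c hc with forward | backward
  · have dir_first : o.dir a c.snd := forward _ first_mem
    have dir_last : o.dir c.penultimate a := forward _ last_mem
    tauto
  · have dir_first : o.dir c.snd a := backward _ first_mem
    have dir_last : o.dir a c.penultimate := backward _ last_mem
    tauto

lemma not_pairwise_consecutiveOnCycle (hG : G.CyclicallyOrientable) {a p q r : V}
    (hpq : ConsecutiveOnCycle G p a q) (hqr : ConsecutiveOnCycle G q a r) :
    ¬ ConsecutiveOnCycle G p a r := by
  intro hpr
  obtain ⟨o, ho⟩ := hG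
  have := hpq.dir_iff_not_dir ho
  have := hqr.dir_iff_not_dir ho
  have := hpr.dir_iff_not_dir ho
  tauto

lemma InducesCycle.consecutiveOnCycle_of_adj {C K : Set V} (hC : InducesCycle G C)
    (hK : (G.induce K).Preconnected) (hKC : Disjoint K C) {a p s r : V} (ha : a ∈ C)
    (hsr : s ≠ r) (hCa : C ∩ G.neighborSet a = {s, r}) (hKa : K ∩ G.neighborSet a = {p})
    {k t : V} (hk : k ∈ K) (ht : t ∈ C \ {a, s}) (hkt : G.Adj k t) :
    ConsecutiveOnCycle G p a r := by
  obtain ⟨hpK, hap⟩ : p ∈ K ∩ G.neighborSet a := hKa ▸ rfl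
  obtain ⟨-, has⟩ : s ∈ C ∩ G.neighborSet a := hCa ▸ .inl rfl
  obtain ⟨hrC, har⟩ : r ∈ C ∩ G.neighborSet a := hCa ▸ .inr rfl
  have hT : (G.induce (K ∪ C \ {a, s})).Preconnected :=
    (connected_induce_union hK (hC.preconnected_induce_diff_pair has) hk ht hkt).preconnected
  refine .of_preconnected_induce hT ?_ (.inl hpK) (.inr ⟨hrC, ?_⟩) (hKC.ne_of_mem hpK hrC)
    hap har ?_
  · rintro (haK | haC)
    exacts [hKC.ne_of_mem haK ha rfl, haC.2 (.inl rfl)]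
  · rintro (rfl | rfl)
    exacts [G.irrefl har, hsr rfl]
  · rintro u ⟨huK | huC, hau⟩
    · exact .inl (hKa.le ⟨huK, hau⟩)
    · exact (hCa.le ⟨huC.1, hau⟩).elim (fun h => absurd (.inr h) huC.2) .inr

lemma InducesCycle.exists_adj_of_unique_neighbor (hG : G.CyclicallyOrientable) {C K : Set V}
    (hC : InducesCycle G C) (hK : (G.induce K).Preconnected) (hKC : Disjoint K C) {a p : V}
    (ha : a ∈ C) (hKa : K ∩ G.neighborSet a = {p}) :
    ∃ s ∈ C, G.Adj a s ∧ ∀ k ∈ K, C ∩ G.neighborSet k ⊆ {a, s} := by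
  by_contra! not_attached
  have exists_adj_outside : ∀ s ∈ C ∩ G.neighborSet a, ∃ k ∈ K, ∃ t ∈ C \ {a, s}, G.Adj k t := by
    intro s hs
    obtain ⟨k, hk, hsub⟩ := not_attached s hs.1 hs.2
    obtain ⟨t, ht, hts⟩ := Set.not_subset.1 hsub
    exact ⟨k, hk, t, ⟨ht.1, hts⟩, ht.2⟩
  obtain ⟨s, r, hsr, hCa⟩ := hC.exists_inter_neighborSet_eq_pair ha
  have hs : s ∈ C ∩ G.neighborSet a := hCa ▸ .inl rfl
  have hr : r ∈ C ∩ G.neighborSet a := hCa ▸ .inr rfl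
  obtain ⟨i, hi, t, ht, hit⟩ := exists_adj_outside s hs
  obtain ⟨j, hj, u, hu, hju⟩ := exists_adj_outside r hr
  have p_a_r : ConsecutiveOnCycle G p a r :=
    hC.consecutiveOnCycle_of_adj hK hKC ha hsr hCa hKa hi ht hit
  have p_a_s : ConsecutiveOnCycle G p a s :=
    hC.consecutiveOnCycle_of_adj hK hKC ha hsr.symm (Set.pair_comm s r ▸ hCa) hKa hj hu hju
  have s_a_r : ConsecutiveOnCycle G s a r := ⟨hsr, hs.2, hr.2, C, hC, ha, hs.1, hr.1⟩
  exact not_pairwise_consecutiveOnCycle hG p_a_s s_a_r p_a_r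

lemma InducesCycle.exists_adj_forall_inter_neighborSet_subset (hG : G.CyclicallyOrientable)
    {C K : Set V} (hC : InducesCycle G C) (hK : (G.induce K).Preconnected) (hfin : K.Finite)
    (hKC : Disjoint K C) :
    ∃ x ∈ C, ∃ y ∈ C, G.Adj x y ∧ ∀ k ∈ K, C ∩ G.neighborSet k ⊆ {x, y} := by
  induction hcard : K.ncard generalizing K with
  | zero =>
    obtain rfl := (Set.ncard_eq_zero hfin).1 hcard
    obtain ⟨x, hx⟩ := hC.nonempty
    obtain ⟨y, hy, hxy⟩ := hC.exists_adj hx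
    exact ⟨x, hx, y, hy, hxy, by simp⟩
  | succ n ih =>
    have hne : K.Nonempty := Set.nonempty_of_ncard_ne_zero (by omega)
    obtain ⟨p, hp, hK'⟩ := exists_preconnected_induce_diff_singleton hK hfin hne
    obtain ⟨x, hx, y, hy, hxy, attach⟩ := ih hK' hfin.sdiff (hKC.mono_left Set.sdiff_subset)
      (by rw [Set.ncard_sdiff_singleton_of_mem hp, hcard, Nat.add_sub_cancel])
    by_cases attach_p : C ∩ G.neighborSet p ⊆ {x, y}
    · refine ⟨x, hx, y, hy, hxy, fun k hk => ?_⟩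
      by_cases hkp : k = p
      exacts [hkp ▸ attach_p, attach k ⟨hk, hkp⟩]
    · obtain ⟨a, ⟨ha, hpa⟩, haxy⟩ := Set.not_subset.1 attach_p
      have hKa : K ∩ G.neighborSet a = {p} :=
        Set.eq_singleton_iff_unique_mem.2 ⟨⟨hp, hpa.symm⟩, fun k hk =>
          by_contra fun hkp => haxy (attach k ⟨hk.1, hkp⟩ ⟨ha, hk.2.symm⟩)⟩
      obtain ⟨s, hs, has, attach_s⟩ := hC.exists_adj_of_unique_neighbor hG hK hKC ha hKa
      exact ⟨a, ha, s, hs, has, attach_s⟩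

lemma InducesCycle.exists_isEdgeSeparation (hG : G.CyclicallyOrientable) {C W : Set V}
    (hC : InducesCycle G C) (hCW : C ⊂ W) (hW : W.Finite) :
    ∃ A B, A ⊂ W ∧ B ⊂ W ∧ A ∪ B = W ∧ IsEdgeSeparation G A B := by
  obtain ⟨x, hx⟩ := Set.nonempty_of_ssubset hCW
  obtain ⟨K, hKX, hxK, hK, closed⟩ := exists_preconnected_induce_closed hx
  have hKW : K ⊆ W := hKX.trans Set.sdiff_subset
  have hKC : Disjoint K C := Set.disjoint_sdiff_left.mono_left hKX
  obtain ⟨a, ha, b, hb, hab, attach⟩ :=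
    hC.exists_adj_forall_inter_neighborSet_subset hG hK (hW.subset hKW) hKC
  have pair_subset : {a, b} ⊆ C := Set.pair_subset ha hb
  have pair_ssubset : {a, b} ⊂ C := by
    refine pair_subset.ssubset_of_not_subset fun h => ?_
    have := Set.ncard_le_ncard h
    have := hC.three_le_ncard
    have := Set.ncard_pair hab.ne
    omega
  obtain ⟨z, hzC, hzab⟩ := Set.exists_of_ssubset pair_ssubset
  have pair_subset_diff : {a, b} ⊆ W \ K :=
    pair_subset.trans (Set.subset_sdiff.2 ⟨hCW.subset, hKC.symm⟩)
  refine ⟨K ∪ {a, b}, W \ K, ?_, ?_, ?_, ⟨a, b, hab, ?_⟩, ?_⟩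
  · refine ⟨Set.union_subset hKW (pair_subset.trans hCW.subset), fun h => ?_⟩
    exact (h (hCW.subset hzC)).elim (fun hzK => hKC.ne_of_mem hzK hzC rfl) hzab
  · exact ⟨Set.sdiff_subset, fun h => (h (hKW hxK)).2 hxK⟩
  · rw [Set.union_right_comm, Set.union_sdiff_cancel hKW,
      Set.union_eq_left.2 (pair_subset.trans hCW.subset)]
  · rw [Set.union_inter_distrib_right, Set.inter_sdiff_self, Set.empty_union,
      Set.inter_eq_left.2 pair_subset_diff]
  · rintro u ⟨hu, huB⟩ v ⟨⟨hvW, hvK⟩, hvA⟩ huv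
    have huK : u ∈ K := by_contra fun h => huB (pair_subset_diff (hu.resolve_left h))
    by_cases hvC : v ∈ C
    · exact hvA (.inr (attach u huK ⟨hvC, huv⟩))
    · exact hvK (closed u huK v ⟨hvW, hvC⟩ huv)

namespace IsEdgeSeparation

variable {A B : Set V}

lemma ncard_inter (hAB : IsEdgeSeparation G A B) : (A ∩ B).ncard = 2 := by
  obtain ⟨a, b, hab, inter_eq⟩ := hAB.exists_inter_eq_pair
  rw [inter_eq, Set.ncard_pair hab.ne]

lemma ncard_inducesCycle_le (hAB : IsEdgeSeparation G A B) (hA : A.Finite) (hB : B.Finite) :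
    {S | InducesCycle G S ∧ S ⊆ A ∪ B}.ncard ≤
      {S | InducesCycle G S ∧ S ⊆ A}.ncard + {S | InducesCycle G S ∧ S ⊆ B}.ncard := by
  have cycles_subset : {S | InducesCycle G S ∧ S ⊆ A ∪ B} ⊆
      {S | InducesCycle G S ∧ S ⊆ A} ∪ {S | InducesCycle G S ∧ S ⊆ B} := fun S ⟨hS, hSAB⟩ =>
    (hS.subset_or_subset_of_isEdgeSeparation hAB hSAB).imp (.intro hS) (.intro hS)
  have cycles_finite :
      ({S | InducesCycle G S ∧ S ⊆ A} ∪ {S | InducesCycle G S ∧ S ⊆ B}).Finite :=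
    (hA.finite_subsets.subset fun _ h => h.2).union (hB.finite_subsets.subset fun _ h => h.2)
  exact (Set.ncard_le_ncard cycles_subset cycles_finite).trans (Set.ncard_union_le _ _)

end IsEdgeSeparation

lemma ncard_inducesCycle_add_two_le (hG : G.CyclicallyOrientable) {W : Set V}
    (hW : 2 ≤ W.ncard) : {S | InducesCycle G S ∧ S ⊆ W}.ncard + 2 ≤ W.ncard := by
  induction hcard : W.ncard using Nat.strong_induction_on generalizing W with
  | h n ih =>
    subst hcard
    have hfin : W.Finite := Set.finite_of_ncard_pos (by omega)
    rcases Set.eq_empty_or_nonempty {S | InducesCycle G S ∧ S ⊆ W} with hnone | ⟨C, hC, hCW⟩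
    · rwa [hnone, Set.ncard_empty, zero_add]
    obtain rfl | hssub := hCW.eq_or_ssubset
    · have eq_singleton : {S | InducesCycle G S ∧ S ⊆ C} = {C} :=
        Set.eq_singleton_iff_unique_mem.2 ⟨⟨hC, hCW⟩, fun S hS => hS.1.eq_of_subset hC hS.2⟩
      rw [eq_singleton, Set.ncard_singleton]
      exact hC.three_le_ncard
    obtain ⟨A, B, hA, hB, rfl, hAB⟩ := hC.exists_isEdgeSeparation hG hssub hfin
    have hfinA := hfin.subset hA.subset
    have hfinB := hfin.subset hB.subset
    have two_le_A := hAB.ncard_inter.ge.trans (Set.ncard_le_ncard Set.inter_subset_left hfinA)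
    have two_le_B := hAB.ncard_inter.ge.trans (Set.ncard_le_ncard Set.inter_subset_right hfinB)
    have cycles_A := ih _ (Set.ncard_lt_ncard hA hfin) two_le_A rfl
    have cycles_B := ih _ (Set.ncard_lt_ncard hB hfin) two_le_B rfl
    have cycles_le := hAB.ncard_inducesCycle_le hfinA hfinB
    have inter_card := hAB.ncard_inter
    have card_add := Set.ncard_union_add_ncard_inter A B hfinA hfinB
    omega

lemma injOn_verts_chordlessCycle :
    Set.InjOn Subgraph.verts
      {H : G.Subgraph | ∃ (v : V) (c : G.Walk v v), c.IsChordlessCycle ∧ c.toSubgraph = H} := by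
  have induce_verts : ∀ H ∈ {H : G.Subgraph | ∃ (v : V) (c : G.Walk v v),
      c.IsChordlessCycle ∧ c.toSubgraph = H}, (⊤ : G.Subgraph).induce H.verts = H := by
    rintro _ ⟨v, c, hc, rfl⟩
    exact (isChordlessCycle_iff_isCycle_and_isInduced.1 hc).2.induce_top_verts
  intro H hH H' hH' h
  rw [← induce_verts H hH, ← induce_verts H' hH', h]

end ChordlessCycles

open ChordlessCycles in
theorem co_chordlessCycle_count_general {V : Type*} (G : SimpleGraph V)
    (hco : G.CyclicallyOrientable) (W : Finset V) (hW : 2 ≤ W.card) :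
    {H : G.Subgraph | (∃ (v : V) (c : G.Walk v v), c.IsChordlessCycle ∧ c.toSubgraph = H) ∧
      H.verts ⊆ W}.ncard ≤ W.card - 2 := by
  rw [← Set.ncard_coe_finset] at hW ⊢
  have induces_verts : ∀ H ∈ {H : G.Subgraph | (∃ (v : V) (c : G.Walk v v),
      c.IsChordlessCycle ∧ c.toSubgraph = H) ∧ H.verts ⊆ W},
      H.verts ∈ {S | InducesCycle G S ∧ S ⊆ (W : Set V)} := by
    rintro _ ⟨⟨v, c, hc, rfl⟩, hcW⟩
    exact ⟨⟨v, c, hc, rfl⟩, hcW⟩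
  have count_le := Set.ncard_le_ncard_of_injOn Subgraph.verts induces_verts
    (injOn_verts_chordlessCycle.mono fun _ h => h.1)
    (W.finite_toSet.finite_subsets.subset fun _ h => h.2)
  have := ncard_inducesCycle_add_two_le hco hW
  omega

/-- A cyclically orientable finite simple graph with `n ≥ 2`
vertices has at most `n - 2` chordless cycles (counted up to equality of the
underlying subgraph, i.e. of vertex and edge sets); in particular the number of
chordless cycles is polynomial in the number of vertices. -/
theorem co_chordlessCycle_count {V : Type*} [Fintype V] (G : SimpleGraph V)
    (hco : G.CyclicallyOrientable) (hn : 2 ≤ Fintype.card V) :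
    {H : G.Subgraph | ∃ (v : V) (c : G.Walk v v),
      c.IsChordlessCycle ∧ c.toSubgraph = H}.ncard ≤ Fintype.card V - 2 := by
  simpa using co_chordlessCycle_count_general G hco Finset.univ hn
end

section
/- Let G be a cyclically orientable finite simple graph. Then every block of G (every maximal subgraph of G without a cut vertex) with n_i ≥ 2 vertices has at most 2·n_i − 3 edges. -/
/-!
A cyclically orientable graph is 2-degenerate, and a 2-degenerate graph on `n ≥ 2` vertices has at
most `2n - 3` edges.

Suppose that `z` has three neighbors such that any two of them, together with `z`, lie on a
chordless cycle in which they are the neighbors of `z`. For any two of the three, exactly one of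
their edges to `z` points away from `z`, which is impossible for three edges. Two neighbors `s`, `t`
of `z` do lie on such a cycle if they are adjacent, or if both have a neighbor in a connected set
`C` that contains neither `z` nor a neighbor of `z`: close up a shortest path from `s` to `t`
through `C`.

To find a vertex of degree at most two in a graph that is not complete, take a maximal connected
set `C` whose closed neighborhood `N[C]` is not everything. By maximality every vertex outside
`N[C]` is adjacent to every vertex of `N[C] \ C`. If `N[C] \ C` has two elements `s`, `t`, a
vertex `z` outside `N[C]` has no third neighbor `x`: either `x` lies in `N[C] \ C`, or `x` is
adjacent to `s` and `t`, and in both cases `s`, `t`, `x` are three neighbors as above. If `N[C] \ C`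
has at most one element, delete `C`: vertices outside `N[C]` lose no neighbors, so it is enough to
find one of degree at most two in the smaller graph. For the induction to provide it, require more
generally that the vertex sought avoid a given set `U` with at most one element, and take `C` with
`U ⊆ N[C]`; the smaller graph is then used with `N[C] \ C` in place of `U`.
-/

open SimpleGraph

variable {V : Type*}

section Walks

variable {W : Type*} {G : SimpleGraph V} {H : SimpleGraph W} {u v : V}

lemma mem_edges_of_length_eq_one {p : G.Walk u v} (hp : p.length = 1) : s(u, v) ∈ p.edges := by
  have hnil : ¬ p.Nil := by simp [← Walk.length_eq_zero_iff, hp]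
  have hsnd : p.snd = v := by rw [Walk.snd, ← hp, p.getVert_length]
  simpa only [hsnd] using p.mk_start_snd_mem_edges hnil

lemma isChordless_of_length_eq_dist {p : G.Walk u v} (hp : p.length = G.dist u v) :
    p.IsChordless := by
  classical
  have mem_edges_of_isSubwalk {x y : V} {q : G.Walk x y} (hq : q.IsSubwalk p) (hxy : G.Adj x y) :
      s(x, y) ∈ p.edges := by
    have hlen : q.length = 1 := (length_eq_dist_of_subwalk hp hq).trans (dist_eq_one_iff_adj.2 hxy)
    exact hq.edges_subset (mem_edges_of_length_eq_one hlen)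
  rw [Walk.isChordless_iff_forall_mem_edges]
  intro x y hx hy hxy
  rw [← p.take_spec hx, Walk.mem_support_append_iff] at hy
  rcases hy with hy | hy
  · rw [Sym2.eq_swap]
    exact mem_edges_of_isSubwalk
      (((p.takeUntil x hx).isSubwalk_dropUntil hy).trans (p.isSubwalk_takeUntil hx)) hxy.symm
  · exact mem_edges_of_isSubwalk
      (((p.dropUntil x hx).isSubwalk_takeUntil hy).trans (p.isSubwalk_dropUntil hx)) hxy

lemma isChordlessCycle_iff {c : G.Walk v v} :
    c.IsChordlessCycle ↔ c.IsCycle ∧ c.IsChordless := by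
  rw [Walk.IsChordlessCycle, Walk.isChordless_iff_forall_mem_edges]

lemma isChordless_map (f : G ↪g H) {p : G.Walk u v} (hp : p.IsChordless) :
    (p.map f.toHom).IsChordless := by
  rw [Walk.isChordless_iff_forall_mem_edges]
  intro x y hx hy hxy
  rw [Walk.support_map, List.mem_map] at hx hy
  obtain ⟨x, hx, rfl⟩ := hx
  obtain ⟨y, hy, rfl⟩ := hy
  rw [Walk.edges_map]
  exact List.mem_map_of_mem (f := Sym2.map f) (hp.mem_edges hx hy (f.map_adj_iff.1 hxy))

lemma isChordlessCycle_map (f : G ↪g H) {c : G.Walk v v} (hc : c.IsChordlessCycle) :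
    (c.map f.toHom).IsChordlessCycle := by
  rw [isChordlessCycle_iff] at hc ⊢
  exact ⟨hc.1.map f.injective, isChordless_map f hc.2⟩

lemma exists_isChordless_path_of_preconnected_induce {K : Set V}
    (hK : (G.induce K).Preconnected) (hu : u ∈ K) (hv : v ∈ K) :
    ∃ p : G.Walk u v, p.IsPath ∧ p.IsChordless ∧ ∀ x ∈ p.support, x ∈ K := by
  obtain ⟨p, hp, hlen⟩ := (hK ⟨u, hu⟩ ⟨v, hv⟩).exists_path_of_dist
  refine ⟨p.map (Embedding.induce K).toHom, hp.map Subtype.val_injective,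
    isChordless_map _ (isChordless_of_length_eq_dist hlen), ?_⟩
  intro x hx
  obtain ⟨y, -, rfl⟩ := List.mem_map.1 (Walk.support_map _ p ▸ hx)
  exact y.2

end Walks

section CyclicOrientations

variable {W : Type*} {G : SimpleGraph V} {H : SimpleGraph W}

/-- The orientation of `H` that makes the embedding `f : H ↪g G` orientation preserving, used to
restrict orientations to induced subgraphs. -/
def orientationComap (o : G.Orientation) (f : H ↪g G) : H.Orientation where
  dir u v := o.dir (f u) (f v)
  dir_adj _ _ h := f.map_adj_iff.1 (o.dir_adj _ _ h)
  adj_iff_dir _ _ h := o.adj_iff_dir _ _ (f.map_adj_iff.2 h)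

lemma isCyclicOn_orientationComap {o : G.Orientation} {f : H ↪g G} {v : W} {c : H.Walk v v}
    (h : o.IsCyclicOn (c.map f.toHom)) : (orientationComap o f).IsCyclicOn c := by
  have hdart {d : H.Dart} (hd : d ∈ c.darts) : f.toHom.mapDart d ∈ (c.map f.toHom).darts := by
    rw [Walk.darts_map]
    exact List.mem_map_of_mem hd
  exact h.imp (fun h d hd => h _ (hdart hd)) (fun h d hd => h _ (hdart hd))

lemma cyclicallyOrientable_of_embedding (hG : G.CyclicallyOrientable) (f : H ↪g G) :
    H.CyclicallyOrientable := by
  obtain ⟨o, ho⟩ := hG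
  exact ⟨orientationComap o f, fun v c hc =>
    isCyclicOn_orientationComap (ho _ _ (isChordlessCycle_map f hc))⟩

lemma dir_snd_iff_of_isCyclicOn {o : G.Orientation} {z : V} {c : G.Walk z z} (hc : ¬ c.Nil)
    (h : o.IsCyclicOn c) : o.dir z c.snd ↔ ¬ o.dir z c.penultimate := by
  have hfirst := c.firstDart_mem_darts hc
  have hlast := c.lastDart_mem_darts hc
  have hsnd := o.adj_iff_dir _ _ (c.adj_snd hc)
  have hpen := o.adj_iff_dir _ _ (c.adj_penultimate hc)
  rcases h with h | h
  · exact iff_of_true (h _ hfirst) (hpen.1 (h _ hlast))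
  · exact iff_of_false (fun hdir => hsnd.1 hdir (h _ hfirst)) (not_not_intro (h _ hlast))

end CyclicOrientations

section LinkedNeighbors

variable {G : SimpleGraph V} {z s t : V}

/-- The neighbors `s` and `t` of `z` are linked at `z` if some chordless cycle leaves `z` towards
`s` and comes back to `z` from `t`. A cyclic orientation forces exactly one of the edges `zs` and
`zt` to point away from `z`. -/
def LinkedAt (G : SimpleGraph V) (z s t : V) : Prop :=
  ∃ c : G.Walk z z, c.IsChordlessCycle ∧ c.snd = s ∧ c.penultimate = t

lemma not_linkedAt_triple (hG : G.CyclicallyOrientable) {x : V} (hxs : LinkedAt G z x s)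
    (hxt : LinkedAt G z x t) (hst : LinkedAt G z s t) : False := by
  obtain ⟨o, ho⟩ := hG
  have dir_iff {a b : V} : LinkedAt G z a b → (o.dir z a ↔ ¬ o.dir z b) := by
    rintro ⟨c, hc, rfl, rfl⟩
    exact dir_snd_iff_of_isCyclicOn hc.1.not_nil (ho z c hc)
  have := dir_iff hxs
  have := dir_iff hxt
  have := dir_iff hst
  tauto

lemma linkedAt_of_isChordless_path (hs : G.Adj z s) (ht : G.Adj z t) (hst : s ≠ t)
    {p : G.Walk s t} (hp : p.IsPath) (hchord : p.IsChordless) (hz : z ∉ p.support)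
    (hN : ∀ x ∈ p.support, G.Adj z x → x = s ∨ x = t) : LinkedAt G z s t := by
  refine ⟨Walk.cons hs (p.concat ht.symm), isChordlessCycle_iff.2 ⟨?_, ?_⟩, by simp, ?_⟩
  · refine (Walk.cons_isCycle_iff _ _).2 ⟨hp.concat hz ht.symm, ?_⟩
    have : s(z, s) ∉ p.edges := fun h => hz (p.fst_mem_support_of_mem_edges h)
    simp [Walk.edges_concat, this, hst, hs.ne']
  · have mem_edges {x : V} (hx : x ∈ p.support) (hzx : G.Adj z x) :
        s(z, x) ∈ (Walk.cons hs (p.concat ht.symm)).edges := by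
      rcases hN x hx hzx with rfl | rfl <;> simp [Walk.edges_concat, Sym2.eq_swap]
    have mem_support {x : V} (hx : x ∈ (Walk.cons hs (p.concat ht.symm)).support) :
        x = z ∨ x ∈ p.support := by
      simp only [Walk.support_cons, Walk.support_concat, List.mem_cons, List.mem_append,
        List.not_mem_nil, or_false] at hx
      tauto
    rw [Walk.isChordless_iff_forall_mem_edges]
    intro x y hx hy hxy
    rcases mem_support hx with rfl | hxp <;> rcases mem_support hy with rfl | hyp
    · exact absurd rfl hxy.ne
    · exact mem_edges hyp hxy
    · exact Sym2.eq_swap ▸ mem_edges hxp hxy.symm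
    · simp [Walk.edges_concat, hchord.mem_edges hxp hyp hxy]
  · have hnil : ¬ (p.concat ht.symm).Nil := by simp [← Walk.length_eq_zero_iff]
    rw [Walk.penultimate_cons_of_not_nil _ _ hnil, Walk.penultimate_concat]

lemma linkedAt_of_preconnected_induce (hs : G.Adj z s) (ht : G.Adj z t) (hst : s ≠ t)
    {K : Set V} (hK : (G.induce K).Preconnected) (hsK : s ∈ K) (htK : t ∈ K) (hz : z ∉ K)
    (hN : ∀ x ∈ K, G.Adj z x → x = s ∨ x = t) : LinkedAt G z s t := by
  obtain ⟨p, hp, hchord, hpK⟩ := exists_isChordless_path_of_preconnected_induce hK hsK htK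
  exact linkedAt_of_isChordless_path hs ht hst hp hchord (fun h => hz (hpK z h))
    fun x hx => hN x (hpK x hx)

lemma linkedAt_of_adj (hs : G.Adj z s) (ht : G.Adj z t) (hst : G.Adj s t) : LinkedAt G z s t :=
  linkedAt_of_preconnected_induce hs ht hst.ne (induce_pair_connected_of_adj hst).preconnected
    (by simp) (by simp) (by simp [hs.ne, ht.ne]) (by simp)

lemma encard_neighborSet_le_two_of_linkedAt (hG : G.CyclicallyOrientable) (hst : s ≠ t)
    (hlink : LinkedAt G z s t)
    (h : ∀ x, G.Adj z x → x ≠ s → x ≠ t → LinkedAt G z x s ∧ LinkedAt G z x t) :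
    (G.neighborSet z).encard ≤ 2 := by
  have hsub : G.neighborSet z ⊆ {s, t} := by
    intro x hx
    by_contra! hxst
    obtain ⟨hxs, hxt⟩ := not_or.1 hxst
    obtain ⟨hlink_xs, hlink_xt⟩ := h x hx hxs hxt
    exact not_linkedAt_triple hG hlink_xs hlink_xt hlink
  exact (Set.encard_le_encard hsub).trans_eq (Set.encard_pair hst)

lemma encard_neighborSet_le_two_of_isClique (hG : G.CyclicallyOrientable)
    (hz : G.IsClique (G.neighborSet z)) : (G.neighborSet z).encard ≤ 2 := by
  rcases Set.subsingleton_or_nontrivial (G.neighborSet z) with hsub | ⟨s, hs, t, ht, hst⟩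
  · exact (Set.encard_le_one_iff_subsingleton.2 hsub).trans one_le_two
  · exact encard_neighborSet_le_two_of_linkedAt hG hst (linkedAt_of_adj hs ht (hz hs ht hst))
      fun x hx hxs hxt =>
        ⟨linkedAt_of_adj hx hs (hz hx hs hxs), linkedAt_of_adj hx ht (hz hx ht hxt)⟩

end LinkedNeighbors

section ClosedNeighborhoods

variable {G : SimpleGraph V} {C U : Set V} {s t w z : V}

/-- The closed neighborhood `N[C]` of a set `C` of vertices: the vertices of `C` and their
neighbors. -/
def closedNeighborhood (G : SimpleGraph V) (C : Set V) : Set V :=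
  {v | v ∈ C ∨ ∃ c ∈ C, G.Adj c v}

lemma connected_induce_insert (hC : (G.induce C).Preconnected)
    (hs : s ∈ closedNeighborhood G C) : (G.induce (insert s C)).Connected := by
  rcases hs with hs | ⟨c, hc, hcs⟩
  · rw [Set.insert_eq_of_mem hs]
    exact { preconnected := hC, nonempty := ⟨⟨s, hs⟩⟩ }
  · rw [Set.insert_eq, Set.union_comm]
    exact connected_induce_union hC Preconnected.of_subsingleton hc rfl hcs

lemma linkedAt_of_mem_closedNeighborhood (hC : (G.induce C).Preconnected)
    (hz : z ∉ closedNeighborhood G C) (hsC : s ∈ closedNeighborhood G C)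
    (htC : t ∈ closedNeighborhood G C) (hs : G.Adj z s) (ht : G.Adj z t) (hst : s ≠ t) :
    LinkedAt G z s t := by
  have htC' : t ∈ closedNeighborhood G (insert s C) :=
    htC.imp Or.inr fun ⟨c, hc, hct⟩ => ⟨c, Or.inr hc, hct⟩
  have hK := connected_induce_insert (connected_induce_insert hC hsC).preconnected htC'
  refine linkedAt_of_preconnected_induce hs ht hst hK.preconnected (by simp) (by simp) ?_ ?_
  · rintro (rfl | rfl | hzC)
    · exact ht.ne rfl
    · exact hs.ne rfl
    · exact hz (Or.inl hzC)
  · rintro x (rfl | rfl | hxC) hzx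
    · exact Or.inr rfl
    · exact Or.inl rfl
    · exact absurd (Or.inr ⟨x, hxC, hzx.symm⟩) hz

lemma encard_neighborSet_le_two_of_nontrivial (hG : G.CyclicallyOrientable)
    (hC : (G.induce C).Preconnected)
    (hjoin : ∀ w ∉ closedNeighborhood G C, ∀ s ∈ closedNeighborhood G C \ C, G.Adj w s)
    (hS : (closedNeighborhood G C \ C).Nontrivial) (hz : z ∉ closedNeighborhood G C) :
    (G.neighborSet z).encard ≤ 2 := by
  obtain ⟨s, hs, t, ht, hst⟩ := hS
  refine encard_neighborSet_le_two_of_linkedAt hG hst (linkedAt_of_mem_closedNeighborhood hC hz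
    hs.1 ht.1 (hjoin z hz s hs) (hjoin z hz t ht) hst) fun x hx hxs hxt => ?_
  have linked {y : V} (hy : y ∈ closedNeighborhood G C \ C) (hxy : x ≠ y) : LinkedAt G z x y := by
    by_cases hxC : x ∈ closedNeighborhood G C
    · exact linkedAt_of_mem_closedNeighborhood hC hz hxC hy.1 hx (hjoin z hz y hy) hxy
    · exact linkedAt_of_adj hx (hjoin z hz y hy) (hjoin x hxC y hy)
  exact ⟨linked hs hxs, linked ht hxt⟩

/-- The connected sets of vertices whose closed neighborhood contains `U` but is not everything.
In a cyclically orientable graph, a maximal one leads to a vertex of degree at most two. -/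
def IsNondominating (G : SimpleGraph V) (U C : Set V) : Prop :=
  (G.induce C).Connected ∧ U ⊆ closedNeighborhood G C ∧ closedNeighborhood G C ≠ Set.univ

lemma exists_isNondominating (hG : G ≠ ⊤) (hU : U.Subsingleton) :
    ∃ C, IsNondominating G U C := by
  by_contra! hnone
  have adj_of_dominated {x y : V} (hx : U ⊆ closedNeighborhood G {x}) (hxy : x ≠ y) :
      G.Adj x y := by
    by_contra hadj
    refine hnone {x} ⟨Connected.of_subsingleton, hx, fun h => ?_⟩
    have hy : y ∈ closedNeighborhood G {x} := h ▸ Set.mem_univ y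
    simp [closedNeighborhood, hxy.symm, hadj] at hy
  have dominated (x : V) : U ⊆ closedNeighborhood G {x} := by
    intro u hu
    have hu' : U ⊆ closedNeighborhood G {u} := fun v hv => Or.inl (hU hv hu)
    by_cases hux : u = x
    · exact Or.inl hux
    · exact Or.inr ⟨x, rfl, (adj_of_dominated hu' hux).symm⟩
  exact hG (eq_top_iff.2 fun x y hxy => adj_of_dominated (dominated x) hxy)

lemma adj_of_maximal_isNondominating (hC : Maximal (IsNondominating G U) C)
    (hw : w ∉ closedNeighborhood G C) (hs : s ∈ closedNeighborhood G C \ C) : G.Adj w s := by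
  obtain ⟨hconn, hUC, -⟩ := hC.prop
  by_contra hws
  have hw' : w ∉ closedNeighborhood G (insert s C) := by
    rintro ((rfl | hwC) | ⟨c, rfl | hcC, hcw⟩)
    · exact hw hs.1
    · exact hw (Or.inl hwC)
    · exact hws hcw.symm
    · exact hw (Or.inr ⟨c, hcC, hcw⟩)
  have hU' : U ⊆ closedNeighborhood G (insert s C) := fun u hu =>
    (hUC hu).imp Or.inr fun ⟨c, hc, hcu⟩ => ⟨c, Or.inr hc, hcu⟩
  have hins : IsNondominating G U (insert s C) :=
    ⟨connected_induce_insert hconn.preconnected hs.1, hU', fun h => hw' (h ▸ Set.mem_univ w)⟩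
  exact hs.2 (hC.le_of_ge hins (Set.subset_insert s C) (Set.mem_insert s C))

end ClosedNeighborhoods

section Degeneracy

variable {W : Type*} {G : SimpleGraph V} {H : SimpleGraph W} {k : ℕ}

lemma image_inter_neighborSet_of_embedding (f : H ↪g G) (A : Set W) (w : W) :
    f '' A ∩ G.neighborSet (f w) = f '' (A ∩ H.neighborSet w) := by
  ext v
  constructor
  · rintro ⟨⟨x, hx, rfl⟩, hwx⟩
    exact ⟨x, ⟨hx, f.map_adj_iff.1 hwx⟩, rfl⟩
  · rintro ⟨x, ⟨hx, hwx⟩, rfl⟩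
    exact ⟨⟨x, hx, rfl⟩, f.map_adj_iff.2 hwx⟩

lemma encard_neighborSet_induce (A : Set V) (v : A) :
    ((G.induce A).neighborSet v).encard = (A ∩ G.neighborSet v).encard := by
  have himage := image_inter_neighborSet_of_embedding (Embedding.induce (G := G) A) Set.univ v
  rw [Set.univ_inter, Set.image_univ] at himage
  rw [← Subtype.val_injective.encard_image]
  exact congrArg Set.encard (himage.symm.trans (congrArg (· ∩ _) Subtype.range_coe))

lemma exists_notMem_encard_neighborSet_le_two [Finite V] (hG : G.CyclicallyOrientable) {U : Set V}
    (hU : U.Subsingleton) (hU' : U ≠ Set.univ) : ∃ z ∉ U, (G.neighborSet z).encard ≤ 2 := by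
  induction hn : Nat.card V using Nat.strong_induction_on generalizing V with
  | h n ih =>
  obtain rfl | htop := eq_or_ne G ⊤
  · obtain ⟨z, hz⟩ := (Set.ne_univ_iff_exists_notMem U).1 hU'
    exact ⟨z, hz, encard_neighborSet_le_two_of_isClique hG fun _ _ _ _ => id⟩
  obtain ⟨C, hC⟩ := Set.Finite.exists_maximal (Set.toFinite {C | IsNondominating G U C})
    (exists_isNondominating htop hU)
  obtain ⟨hconn, hUC, hne⟩ := hC.prop
  obtain ⟨z, hz⟩ := (Set.ne_univ_iff_exists_notMem _).1 hne
  rcases (closedNeighborhood G C \ C).subsingleton_or_nontrivial with hsub | hnontriv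
  · have hcard : Nat.card (Cᶜ : Set V) < n := by
      obtain ⟨c⟩ := hconn.nonempty
      rw [← hn, Nat.card_coe_set_eq]
      exact Set.ncard_lt_card fun h => (h ▸ Set.mem_univ c.1 : c.1 ∈ Cᶜ) c.2
    obtain ⟨y, hy, hdeg⟩ := ih _ hcard
      (cyclicallyOrientable_of_embedding hG (Embedding.induce Cᶜ))
      (U := {v : (Cᶜ : Set V) | v.1 ∈ closedNeighborhood G C})
      (fun v hv w hw => Subtype.ext (hsub ⟨hv, v.2⟩ ⟨hw, w.2⟩))
      (fun h => hz (Set.eq_univ_iff_forall.1 h ⟨z, fun hzC => hz (Or.inl hzC)⟩)) rfl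
    have hNC : G.neighborSet y ⊆ Cᶜ := fun x hx hxC => hy (Or.inr ⟨x, hxC, hx.symm⟩)
    refine ⟨y, fun h => hy (hUC h), ?_⟩
    rwa [encard_neighborSet_induce, Set.inter_eq_right.2 hNC] at hdeg
  · exact ⟨z, fun h => hz (hUC h), encard_neighborSet_le_two_of_nontrivial hG hconn.preconnected
      (fun w hw s hs => adj_of_maximal_isNondominating hC hw hs) hnontriv hz⟩

/-- `G` is `k`-degenerate if every nonempty finite set `A` of vertices contains a vertex with at
most `k` neighbors in `A`. For `k = 2` this is the property of cyclically orientable graphs that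
bounds their number of edges. -/
def IsDegenerate (G : SimpleGraph V) (k : ℕ) : Prop :=
  ∀ A : Set V, A.Finite → A.Nonempty → ∃ v ∈ A, (A ∩ G.neighborSet v).encard ≤ k

lemma isDegenerate_two_of_cyclicallyOrientable (hG : G.CyclicallyOrientable) :
    IsDegenerate G 2 := by
  intro A hA hne
  have : Finite A := hA
  have : Nonempty A := hne.to_subtype
  obtain ⟨v, -, hv⟩ := exists_notMem_encard_neighborSet_le_two
    (cyclicallyOrientable_of_embedding hG (Embedding.induce A)) Set.subsingleton_empty
    Set.empty_ne_univ
  exact ⟨v, v.2, encard_neighborSet_induce A v ▸ hv⟩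

lemma choose_two_add_succ_choose_two (k : ℕ) : k.choose 2 + (k + 1).choose 2 = k * k := by
  induction k with
  | zero => rfl
  | succ k ih =>
    have hk := Nat.choose_succ_succ' k 1
    have hk' := Nat.choose_succ_succ' (k + 1) 1
    simp only [Nat.choose_one_right, Nat.reduceAdd] at hk hk'
    linarith

lemma ncard_edgeSet_le_choose_two [Finite V] (G : SimpleGraph V) :
    G.edgeSet.ncard ≤ (Nat.card V).choose 2 := by
  classical
  have := Fintype.ofFinite V
  rw [Nat.card_eq_fintype_card, ← coe_edgeFinset, Set.ncard_coe_finset]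
  exact G.card_edgeFinset_le_card_choose_two

lemma ncard_edgeSet_eq_induce_compl_singleton_add [Finite V] (G : SimpleGraph V) (v : V) :
    G.edgeSet.ncard = (G.induce {v}ᶜ).edgeSet.ncard + (G.neighborSet v).ncard := by
  classical
  have := Fintype.ofFinite V
  rw [← coe_edgeFinset, ← coe_edgeFinset, ← coe_neighborFinset]
  simp only [Set.ncard_coe_finset]
  rw [card_edgeFinset_induce_compl_singleton, card_edgeFinset_deleteIncidenceSet,
    card_neighborFinset_eq_degree, Nat.sub_add_cancel]
  exact G.degree_le_card_edgeFinset v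

namespace IsDegenerate

lemma of_embedding (hG : IsDegenerate G k) (f : H ↪g G) : IsDegenerate H k := by
  intro A hA hne
  obtain ⟨_, ⟨w, hw, rfl⟩, hdeg⟩ := hG (f '' A) (hA.image f) (hne.image f)
  rw [image_inter_neighborSet_of_embedding, f.injective.encard_image] at hdeg
  exact ⟨w, hw, hdeg⟩

lemma ncard_edgeSet_add_choose_le [Finite V] (hG : IsDegenerate G k) (hk : k ≤ Nat.card V) :
    G.edgeSet.ncard + (k + 1).choose 2 ≤ k * Nat.card V := by
  generalize hn : Nat.card V = n at hk ⊢
  induction n, hk using Nat.le_induction generalizing V with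
  | base =>
    have hedges := ncard_edgeSet_le_choose_two G
    rw [hn] at hedges
    exact (Nat.add_le_add_right hedges _).trans_eq (choose_two_add_succ_choose_two k)
  | succ n _ ih =>
    have : Nonempty V := (Nat.card_pos_iff.1 (by omega)).1
    obtain ⟨v, -, hv⟩ := hG Set.univ Set.finite_univ Set.univ_nonempty
    rw [Set.univ_inter] at hv
    have hdeg : (G.neighborSet v).ncard ≤ k := (Set.encard_le_coe_iff_finite_ncard_le.1 hv).2
    have hcard : Nat.card ({v}ᶜ : Set V) = n := by
      rw [Nat.card_coe_set_eq, Set.ncard_compl, Set.ncard_singleton, hn, Nat.add_sub_cancel]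
    have hind := ih (hG.of_embedding (Embedding.induce {v}ᶜ)) hcard
    have hedges := ncard_edgeSet_eq_induce_compl_singleton_add G v
    rw [Nat.mul_succ]
    omega

end IsDegenerate

end Degeneracy

theorem co_block_edge_bound_general (G : SimpleGraph V) (hco : G.CyclicallyOrientable)
    (B : G.Subgraph) (hn : 2 ≤ B.verts.ncard) :
    B.edgeSet.ncard ≤ 2 * B.verts.ncard - 3 := by
  have : Finite B.verts := Set.finite_of_ncard_pos (by omega)
  have hdeg : IsDegenerate (G.induce B.verts) 2 :=
    (isDegenerate_two_of_cyclicallyOrientable hco).of_embedding (Embedding.induce B.verts)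
  have hbound := hdeg.ncard_edgeSet_add_choose_le (by rwa [Nat.card_coe_set_eq])
  have hle : B.coe ≤ G.induce B.verts := fun _ _ h => B.adj_sub h
  have hedges : B.edgeSet.ncard ≤ (G.induce B.verts).edgeSet.ncard := by
    rw [← B.image_coe_edgeSet_coe]
    exact (Set.ncard_image_le (Set.toFinite _)).trans
      (Set.ncard_le_ncard (edgeSet_mono hle) (Set.toFinite _))
  rw [Nat.card_coe_set_eq] at hbound
  have hchoose : (2 + 1).choose 2 = 3 := rfl
  omega

/-- In a cyclically orientable finite simple graph, every block
with `n_i ≥ 2` vertices has at most `2 * n_i - 3` edges. -/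
theorem co_block_edge_bound {V : Type*} [Fintype V] (G : SimpleGraph V)
    (hco : G.CyclicallyOrientable) (B : G.Subgraph) (hB : B.IsBlock)
    (hn : 2 ≤ B.verts.ncard) :
    B.edgeSet.ncard ≤ 2 * B.verts.ncard - 3 :=
  co_block_edge_bound_general G hco B hn
end
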